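/- arXiv:1306.3478 — 10 statements merged into one kernel-verified Lean document; each statement's English description precedes it below -/
import Mathlib

section
/- Let h : V → V be an 𝔽_p-linear map such that the graph {(u, h(u)) : u ∈ V} is a totally isotropic subspace of W = V ⊕ V with respect to the form ⟨(u,v),(u',v')⟩ = tr(u·v' − v·u'). Then for every v ∈ V the vector b_{h,v} = Σ_{w∈V} ω^{tr((1/2)w·h(w) + v·w)} e_w satisfies D_{u,h(u)}(b_{h,v}) = ω^{−tr((1/2)u·h(u) + v·u)} b_{h,v} for all u ∈ V; in particular b_{h,v} is a common eigenvector of the matrices D_{u,h(u)}, u ∈ V. -/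
open Matrix

/-!
Let `ψ x = ω ^ tr x` and `q u = ½ u·h(u) + v·u`. As `h` is additive,
`q (u + w) = q u + q w + h(u)·w + ½ (u·h(w) - h(u)·w)`, and isotropy of the graph makes `ψ` trivial
on the last term, which is `(½u)·h(w) - h(½u)·w`. Since `D_{u,h(u)}` moves the coordinate at `w` to
`u + w` with the factor `ψ (h(u)·w)`, this is the eigenvector equation, with eigenvalue `ψ (-q u)`.
-/

lemma map_invOf_two_smul {R M N : Type*} [Semiring R] [Invertible (2 : R)] [AddCommMonoid M]
    [Module R M] [AddCommMonoid N] [Module R N] (f : M →+ N) (x : M) :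
    f ((⅟2 : R) • x) = (⅟2 : R) • f x := by
  have hx : f x = (2 : R) • f ((⅟2 : R) • x) := by
    rw [two_smul, ← map_add, invOf_two_smul_add_invOf_two_smul]
  rw [hx, invOf_smul_smul]

section Pauli

variable {ι R S : Type*} [Fintype ι] [CommRing R] [CommSemiring S]

/-- The generalized Pauli operator `X(u) Z(v)` attached to an additive character `ψ`, sending the
basis vector `e_w` to `ψ (v ⬝ᵥ w) • e_{u + w}`. It acts on all functions `(ι → R) → S`, which
makes sense for infinite `R` as well. -/
def pauliOp (ψ : AddChar R S) (u v : ι → R) : Module.End S ((ι → R) → S) where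
  toFun f w := ψ (v ⬝ᵥ (w - u)) * f (w - u)
  map_add' f g := by ext w; exact mul_add _ _ _
  map_smul' c f := by ext w; exact mul_left_comm _ _ _

lemma pauliOp_apply_add (ψ : AddChar R S) (u v : ι → R) (f : (ι → R) → S) (w : ι → R) :
    pauliOp ψ u v f (u + w) = ψ (v ⬝ᵥ w) * f w := by
  simp [pauliOp]

lemma mulVec_eq_pauliOp [Fintype (ι → R)] [DecidableEq (ι → R)] (ψ : AddChar R S) {u v : ι → R}
    {A : Matrix (ι → R) (ι → R) S}
    (hA : ∀ w' w, A w' w = if w' = u + w then ψ (v ⬝ᵥ w) else 0) (f : (ι → R) → S) :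
    A *ᵥ f = pauliOp ψ u v f := by
  ext w'
  obtain ⟨w, rfl⟩ : ∃ w, u + w = w' := ⟨w' - u, add_sub_cancel u w'⟩
  simp [pauliOp_apply_add, mulVec, dotProduct, hA]

/-- The vector `b_{h,v}` attached to an additive character `ψ`: its coordinate at `w` is the
quadratic phase `ψ (½ w·h(w) + v·w)`. -/
def quadraticPhase [Invertible (2 : R)] (ψ : AddChar R S) (h : (ι → R) → ι → R) (v : ι → R) :
    (ι → R) → S :=
  fun w => ψ (⅟2 * (w ⬝ᵥ h w) + v ⬝ᵥ w)

variable [Invertible (2 : R)] (ψ : AddChar R S) (h : (ι → R) →+ (ι → R))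

lemma addChar_invOf_two_mul_eq_one_of_isotropic
    (hiso : ∀ u w, ψ (u ⬝ᵥ h w - h u ⬝ᵥ w) = 1) (u w : ι → R) :
    ψ (⅟2 * (u ⬝ᵥ h w - h u ⬝ᵥ w)) = 1 := by
  simpa only [map_invOf_two_smul, smul_dotProduct, smul_eq_mul, ← mul_sub]
    using hiso ((⅟2 : R) • u) w

lemma quadraticPhase_add (hiso : ∀ u w, ψ (u ⬝ᵥ h w - h u ⬝ᵥ w) = 1) (v u w : ι → R) :
    quadraticPhase ψ h v (u + w) =
      quadraticPhase ψ h v u * (ψ (h u ⬝ᵥ w) * quadraticPhase ψ h v w) := by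
  have expand : ⅟2 * ((u + w) ⬝ᵥ h (u + w)) + v ⬝ᵥ (u + w) =
      (⅟2 * (u ⬝ᵥ h u) + v ⬝ᵥ u) + (h u ⬝ᵥ w + (⅟2 * (w ⬝ᵥ h w) + v ⬝ᵥ w)) +
        ⅟2 * (u ⬝ᵥ h w - h u ⬝ᵥ w) := by
    simp only [map_add, add_dotProduct, dotProduct_add, dotProduct_comm w (h u)]
    linear_combination (h u ⬝ᵥ w) * invOf_mul_self (2 : R)
  simp only [quadraticPhase, expand, AddChar.map_add_eq_mul,
    addChar_invOf_two_mul_eq_one_of_isotropic ψ h hiso, mul_one]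

theorem pauli_eigenvector_of_isotropic_graph_general
    (hiso : ∀ u w, ψ (u ⬝ᵥ h w - h u ⬝ᵥ w) = 1) (u v : ι → R) :
    pauliOp ψ u (h u) (quadraticPhase ψ h v) =
      ψ (-(⅟2 * (u ⬝ᵥ h u) + v ⬝ᵥ u)) • quadraticPhase ψ h v := by
  ext w'
  obtain ⟨w, rfl⟩ : ∃ w, u + w = w' := ⟨w' - u, add_sub_cancel u w'⟩
  have cancel : ψ (-(⅟2 * (u ⬝ᵥ h u) + v ⬝ᵥ u)) * quadraticPhase ψ h v u = 1 := by
    rw [quadraticPhase, ← AddChar.map_add_eq_mul, neg_add_cancel, AddChar.map_zero_eq_one]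
  rw [pauliOp_apply_add, Pi.smul_apply, smul_eq_mul, quadraticPhase_add ψ h hiso, ← mul_assoc,
    cancel, one_mul]

end Pauli

/-- **Lemma.** Let `F = 𝔽_q` be a finite field of odd order `q = p^r`, `V = F^k`,
`tr : F → 𝔽_p` the absolute trace, and `ω ∈ ℂ` a primitive `p`-th root of unity.
Let `h : V → V` be an `𝔽_p`-linear map whose graph is a totally isotropic subspace of
`V ⊕ V` for the form `⟨(u,v),(u',v')⟩ = tr (u ⬝ᵥ v' - v ⬝ᵥ u')`.  Then for every `v ∈ V`
the vector `b_{h,v} = ∑_w ω^{tr(2⁻¹ w·h(w) + v·w)} e_w` satisfies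
`D_{u,h(u)} b_{h,v} = ω^{-tr(2⁻¹ u·h(u) + v·u)} • b_{h,v}` for all `u ∈ V`; in particular
`b_{h,v}` is a common eigenvector of the generalized Pauli matrices `D_{u,h(u)}`, `u ∈ V`. -/
theorem pauli_eigenvector_of_isotropic_graph
    (p r : ℕ) [Fact p.Prime] (hp : Odd p)
    (F : Type*) [Field F] [Fintype F] [DecidableEq F] [CharP F p] [Algebra (ZMod p) F]
    (hcard : Fintype.card F = p ^ r)
    (ω : ℂ) (hω : IsPrimitiveRoot ω p)
    (k : ℕ) (h : (Fin k → F) → (Fin k → F))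
    -- `h` is `𝔽_p`-linear
    (hlin : IsLinearMap (ZMod p) h)
    -- the graph of `h` is a totally isotropic subspace
    (hsub : ∃ S : Submodule (ZMod p) ((Fin k → F) × (Fin k → F)),
      (S : Set ((Fin k → F) × (Fin k → F))) = {x | x.2 = h x.1})
    (hiso : ∀ u w : Fin k → F,
      Algebra.trace (ZMod p) F (u ⬝ᵥ h w - h u ⬝ᵥ w) = 0)
    -- the generalized Pauli matrices `D_{u,v} = X(u) Z(v)`, `D_{u,v} e_w = ω^{tr(v·w)} e_{u+w}`
    (D : (Fin k → F) → (Fin k → F) → Matrix (Fin k → F) (Fin k → F) ℂ)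
    (hD : ∀ u v w' w, D u v w' w =
      if w' = u + w then ω ^ (Algebra.trace (ZMod p) F (v ⬝ᵥ w)).val else 0)
    -- the vectors `b_{h,v}`
    (b : (Fin k → F) → ((Fin k → F) → ℂ))
    (hb : ∀ v w, b v w =
      ω ^ (Algebra.trace (ZMod p) F ((2⁻¹ : F) * (w ⬝ᵥ h w) + v ⬝ᵥ w)).val) :
    ∀ u v : Fin k → F,
      Matrix.mulVec (D u (h u)) (b v) =
        ω ^ (-(Algebra.trace (ZMod p) F ((2⁻¹ : F) * (u ⬝ᵥ h u) + v ⬝ᵥ u))).val • b v := by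
  intro u v
  have two_ne_zero_F : (2 : F) ≠ 0 := Ring.two_ne_zero <| by
    rw [ringChar.eq F p]
    exact hp.ne_two_of_dvd_nat dvd_rfl
  let : Invertible (2 : F) := invertibleOfNonzero two_ne_zero_F
  let ψ : AddChar F ℂ := (AddChar.zmodChar p hω.pow_eq_one).compAddMonoidHom
    (Algebra.trace (ZMod p) F).toAddMonoidHom
  have hψ (x : F) : ψ x = ω ^ (Algebra.trace (ZMod p) F x).val := rfl
  have hψiso (u w : Fin k → F) : ψ (u ⬝ᵥ h w - h u ⬝ᵥ w) = 1 := by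
    rw [hψ, hiso, ZMod.val_zero, pow_zero]
  have hbv : b v = quadraticPhase ψ h v := funext (hb v)
  rw [mulVec_eq_pauliOp ψ (hD u (h u)), hbv, ← map_neg, ← hψ]
  exact pauli_eigenvector_of_isotropic_graph_general ψ (hlin.mk' h).toAddMonoidHom hψiso u v
end

section
/- Let a_{ij} ∈ F for 0 ≤ i ≤ j ≤ r−1 and define x ∘ y = (1/2) Σ_{i≤j} a_{ij}^{p^{r−i}} x^{p^{j−i}} y^{p^{r−i}} + (1/2) Σ_{i≤j} a_{ij}^{p^{r−j}} x^{p^{r+i−j}} y^{p^{r−j}} (exponents of p read modulo r, i.e. x^{p^r} = x). Then tr(x·(z ∘ y)) = tr(z·(x ∘ y)) for all x, y, z ∈ F; equivalently, every subspace {(x, x∘y) : x ∈ F} of F ⊕ F is totally isotropic for the alternating form ⟨(u,v),(u',v')⟩ = tr(uv' − vu'). -/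
open scoped BigOperators

/-!
Knuth's construction makes `∘` dual to the commutative multiplication `*` under the trace form:
`tr (z (x ∘ y)) = tr ((x * z) y)`, because the trace is invariant under Frobenius, so that each
inverse Frobenius power in `x ∘ y` can be moved onto `z`. The right-hand side is symmetric in `x`
and `z` since `*` is commutative, hence so is the left-hand side. Only the invariance of the trace
matters, so the argument works for any additive map invariant under a family of automorphisms.
-/

section KnuthDuality

variable {ι A M : Type*} [Fintype ι]

/-- The commutative multiplication `x * y = ∑ i j, a i j (σ i x σ j y + σ j x σ i y)` of the
paper, for arbitrary automorphisms `σ i` in place of the Frobenius powers `x ↦ x ^ p ^ i`. The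
factor `1 / 2` and the restriction `i ≤ j` are absorbed into the coefficients `a`. -/
def knuthCommMul [CommSemiring A] (σ : ι → A ≃+* A) (a : ι → ι → A) (x y : A) : A :=
  ∑ i, ∑ j, a i j * (σ i x * σ j y + σ j x * σ i y)

/-- The symplectic multiplication `∘` that Knuth's cubical array method associates with
`knuthCommMul σ a`. Distributing the inverse automorphisms over the products gives the monomials
of the paper. -/
def knuthSymplecticMul [CommSemiring A] (σ : ι → A ≃+* A) (a : ι → ι → A) (x y : A) : A :=
  ∑ i, ∑ j, ((σ i).symm (a i j * σ j x * y) + (σ j).symm (a i j * σ i x * y))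

theorem knuthCommMul_comm [CommSemiring A] (σ : ι → A ≃+* A) (a : ι → ι → A) (x y : A) :
    knuthCommMul σ a x y = knuthCommMul σ a y x := by
  refine Finset.sum_congr rfl fun i _ => Finset.sum_congr rfl fun j _ => ?_
  ring

theorem map_mul_symm_apply_of_invariant [Mul A] [Add A] {σ : A ≃+* A} {τ : A → M}
    (hτ : ∀ x, τ (σ x) = τ x) (x y : A) : τ (x * σ.symm y) = τ (σ x * y) := by
  rw [← hτ, map_mul, RingEquiv.apply_symm_apply]

theorem map_mul_knuthSymplecticMul [CommSemiring A] [AddCommMonoid M] {σ : ι → A ≃+* A}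
    (a : ι → ι → A) {τ : A →+ M} (hτ : ∀ i x, τ (σ i x) = τ x) (x y z : A) :
    τ (z * knuthSymplecticMul σ a x y) = τ (knuthCommMul σ a x z * y) := by
  simp only [knuthSymplecticMul, knuthCommMul, Finset.mul_sum, Finset.sum_mul, map_sum]
  refine Finset.sum_congr rfl fun i _ => Finset.sum_congr rfl fun j _ => ?_
  calc τ (z * ((σ i).symm (a i j * σ j x * y) + (σ j).symm (a i j * σ i x * y)))
      = τ (σ i z * (a i j * σ j x * y)) + τ (σ j z * (a i j * σ i x * y)) := by
        rw [mul_add, map_add, map_mul_symm_apply_of_invariant (hτ i),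
          map_mul_symm_apply_of_invariant (hτ j)]
    _ = τ (a i j * (σ i x * σ j z + σ j x * σ i z) * y) := by
        rw [← map_add]
        congr 1
        ring

theorem knuth_symplectic_mul_self_adjoint_general [CommRing A] [AddCommGroup M]
    (σ : ι → A ≃+* A) (a : ι → ι → A) (τ : A →+ M) (hτ : ∀ i x, τ (σ i x) = τ x) :
    (∀ x y z : A, τ (x * knuthSymplecticMul σ a z y) = τ (z * knuthSymplecticMul σ a x y)) ∧
    (∀ y x z : A, τ (x * knuthSymplecticMul σ a z y - z * knuthSymplecticMul σ a x y) = 0) := by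
  have self_adjoint (x y z : A) :
      τ (x * knuthSymplecticMul σ a z y) = τ (z * knuthSymplecticMul σ a x y) := by
    rw [map_mul_knuthSymplecticMul a hτ, knuthCommMul_comm, ← map_mul_knuthSymplecticMul a hτ]
  exact ⟨self_adjoint, fun y x z => by rw [map_sub, self_adjoint, sub_self]⟩

end KnuthDuality

theorem trace_zmod_ringEquiv_apply {n : ℕ} {A : Type*} [CommRing A] [Algebra (ZMod n) A]
    (e : A ≃+* A) (x : A) : Algebra.trace (ZMod n) A (e x) = Algebra.trace (ZMod n) A x :=
  (Algebra.trace_eq_of_equiv_equiv (.refl _) e (RingHom.ext_zmod _ _) x).symm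

section Frobenius

variable {p r : ℕ}

theorem iterateFrobeniusEquiv_symm_apply_of_pow_eq {R : Type*} [CommSemiring R] [ExpChar R p]
    [PerfectRing R p] {x : R} (hx : x ^ p ^ r = x) {i : ℕ} (hi : i ≤ r) :
    (iterateFrobeniusEquiv R p i).symm x = x ^ p ^ (r - i) := by
  rw [RingEquiv.symm_apply_eq, iterateFrobeniusEquiv_def, ← pow_mul, ← pow_add,
    Nat.sub_add_cancel hi, hx]

theorem pow_pow_add_of_pow_eq {R : Type*} [Monoid R] {x : R} (hx : x ^ p ^ r = x) (k : ℕ) :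
    x ^ p ^ (r + k) = x ^ p ^ k := by
  rw [pow_add, pow_mul, hx]

theorem knuthSymplecticMul_iterateFrobeniusEquiv {F : Type*} [Field F] [ExpChar F p]
    [PerfectRing F p] (hF : ∀ x : F, x ^ p ^ r = x) (a : Fin r → Fin r → F) (x y : F) :
    knuthSymplecticMul (fun i : Fin r => iterateFrobeniusEquiv F p i)
        (fun i j => if i ≤ j then 2⁻¹ * a i j else 0) x y =
      (2⁻¹ : F) * (∑ i : Fin r, ∑ j : Fin r, if i ≤ j then
          a i j ^ p ^ (r - (i : ℕ)) * x ^ p ^ ((j : ℕ) - (i : ℕ)) * y ^ p ^ (r - (i : ℕ))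
        else 0) +
      (2⁻¹ : F) * (∑ i : Fin r, ∑ j : Fin r, if i ≤ j then
          a i j ^ p ^ (r - (j : ℕ)) * x ^ p ^ (r + (i : ℕ) - (j : ℕ)) * y ^ p ^ (r - (j : ℕ))
        else 0) := by
  have half_pow (k : ℕ) : (2⁻¹ : F) ^ p ^ k = 2⁻¹ := by
    rw [← iterateFrobenius_def, map_inv₀, map_ofNat]
  have symm_apply (k l : Fin r) (b : F) :
      (iterateFrobeniusEquiv F p k).symm (2⁻¹ * b * iterateFrobeniusEquiv F p l x * y) =
        2⁻¹ * (b ^ p ^ (r - (k : ℕ)) * x ^ p ^ (r + (l : ℕ) - (k : ℕ)) *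
          y ^ p ^ (r - (k : ℕ))) := by
    rw [iterateFrobeniusEquiv_symm_apply_of_pow_eq (hF _) k.isLt.le, iterateFrobeniusEquiv_def,
      mul_pow, mul_pow, mul_pow, half_pow, ← pow_mul, ← pow_add,
      show (l : ℕ) + (r - k) = r + l - k by omega]
    ring
  simp only [knuthSymplecticMul, Finset.mul_sum, ← Finset.sum_add_distrib]
  refine Finset.sum_congr rfl fun i _ => Finset.sum_congr rfl fun j _ => ?_
  split_ifs with hij
  · rw [symm_apply, symm_apply, Nat.add_sub_assoc (Fin.le_def.mp hij),
      pow_pow_add_of_pow_eq (hF x)]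
  · simp

end Frobenius

/-- **Proposition.** Let `F = 𝔽_q`, `q = p^r` odd, with coefficients `a i j ∈ F` for
`0 ≤ i ≤ j ≤ r - 1`, and let `∘` be the symplectic presemifield multiplication obtained by
Knuth's cubical array method from the commutative presemifield multiplication
`x * y = 2⁻¹ ∑_{i≤j} a i j (x^{p^i} y^{p^j} + x^{p^j} y^{p^i})`, namely
`x ∘ y = 2⁻¹ ∑_{i≤j} a i j^{p^{r-i}} x^{p^{j-i}} y^{p^{r-i}}
       + 2⁻¹ ∑_{i≤j} a i j^{p^{r-j}} x^{p^{r+i-j}} y^{p^{r-j}}`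
(exponents of `p` read modulo `r`, which is automatic since `x^{p^r} = x` in `F`).
Then `tr (x * (z ∘ y)) = tr (z * (x ∘ y))` for all `x y z ∈ F`; equivalently, every
subspace `{(x, x ∘ y) : x ∈ F}` of `F ⊕ F` is totally isotropic for the alternating form
`⟨(u,v),(u',v')⟩ = tr (u v' - v u')`. -/
theorem knuth_symplectic_mul_self_adjoint
    (p r : ℕ) [Fact p.Prime] (hp : Odd p) (hr : 0 < r)
    (F : Type*) [Field F] [Fintype F] [CharP F p] [Algebra (ZMod p) F]
    (hcard : Fintype.card F = p ^ r)
    (a : Fin r → Fin r → F)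
    (circ : F → F → F)
    (hcirc : ∀ x y : F, circ x y =
      (2⁻¹ : F) * (∑ i : Fin r, ∑ j : Fin r, if i ≤ j then
          a i j ^ p ^ (r - (i : ℕ)) * x ^ p ^ ((j : ℕ) - (i : ℕ)) * y ^ p ^ (r - (i : ℕ))
        else 0) +
      (2⁻¹ : F) * (∑ i : Fin r, ∑ j : Fin r, if i ≤ j then
          a i j ^ p ^ (r - (j : ℕ)) * x ^ p ^ (r + (i : ℕ) - (j : ℕ)) * y ^ p ^ (r - (j : ℕ))
        else 0)) :
    (∀ x y z : F,
      Algebra.trace (ZMod p) F (x * circ z y) = Algebra.trace (ZMod p) F (z * circ x y)) ∧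
    (∀ y x z : F,
      Algebra.trace (ZMod p) F (x * circ z y - z * circ x y) = 0) := by
  obtain rfl : circ = _ := funext₂ fun x y => (hcirc x y).trans
    (knuthSymplecticMul_iterateFrobeniusEquiv (fun t => hcard ▸ FiniteField.pow_card t) a x y).symm
  exact knuth_symplectic_mul_self_adjoint_general _ _ (Algebra.trace (ZMod p) F).toAddMonoidHom
    fun _ => trace_zmod_ringEquiv_apply _
end

section
/- Let a_{ij} ∈ F for 0 ≤ i ≤ j ≤ r−1, let x * y = (1/2) Σ_{i≤j} a_{ij}(x^{p^i}y^{p^j} + x^{p^j}y^{p^i}), and let x ∘ y = (1/2) Σ_{i≤j} a_{ij}^{p^{r−i}} x^{p^{j−i}} y^{p^{r−i}} + (1/2) Σ_{i≤j} a_{ij}^{p^{r−j}} x^{p^{r+i−j}} y^{p^{r−j}} (exponents of p read modulo r). Then tr((1/2)·w·(w ∘ m)) = tr((1/2)·m·(w * w)) for all w, m ∈ F. In particular, the complete set of MUBs produced from the symplectic presemifield (F,+,∘) coincides with the one produced from the associated planar function of the commutative presemifield (F,+,*). -/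
open scoped BigOperators

/-!
The Frobenius `x ↦ x ^ q` of an extension `L / K` of finite fields, `|K| = q`, preserves the trace,
so the adjoint of its power `x ↦ x ^ q ^ (r - k)` for the trace form is `x ↦ x ^ q ^ k`, where
`r = [L : K]`. Every monomial of `w * (w ∘ m)` contains `a i j` and `m` only through
`(a i j * m) ^ q ^ (r - k)` with `k = i` or `k = j`; moving this power to the other factor produces
the monomial `a i j * m * w ^ (q ^ i + q ^ j)` of `m * (w * w)`, for both choices of `k`.
-/

section Presemifields

variable {R : Type*} [CommSemiring R] {r : ℕ}

/-- The multiplication `x * y` of the commutative presemifield attached to the quadratic polynomial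
`∑_{i ≤ j} a i j X ^ (q ^ i + q ^ j)`. The scalar `c`, which is `1 / 2` for the usual polarization,
is kept as a parameter so that characteristic two is not degenerate. -/
def commutativeMul (q : ℕ) (c : R) (a : Fin r → Fin r → R) (x y : R) : R :=
  c * ∑ i : Fin r, ∑ j : Fin r, if i ≤ j then
      a i j * (x ^ q ^ (i : ℕ) * y ^ q ^ (j : ℕ) + x ^ q ^ (j : ℕ) * y ^ q ^ (i : ℕ))
    else 0

/-- The multiplication `x ∘ y` of the symplectic presemifield which Knuth's cubical array method
attaches to `commutativeMul q c a`. The exponents of `q`, which only matter modulo `r`, are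
represented so that no natural-number subtraction truncates when `i ≤ j`. -/
def symplecticMul (q : ℕ) (c : R) (a : Fin r → Fin r → R) (x y : R) : R :=
  c * (∑ i : Fin r, ∑ j : Fin r, if i ≤ j then
      a i j ^ q ^ (r - (i : ℕ)) * x ^ q ^ ((j : ℕ) - (i : ℕ)) * y ^ q ^ (r - (i : ℕ))
    else 0) +
  c * (∑ i : Fin r, ∑ j : Fin r, if i ≤ j then
      a i j ^ q ^ (r - (j : ℕ)) * x ^ q ^ (r + (i : ℕ) - (j : ℕ)) * y ^ q ^ (r - (j : ℕ))
    else 0)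

end Presemifields

section Trace

variable {K L : Type*} [Field K] [Fintype K] [Field L] [Algebra K L]

theorem trace_pow_card_pow [Algebra.IsAlgebraic K L] (n : ℕ) (x : L) :
    Algebra.trace K L (x ^ Fintype.card K ^ n) = Algebra.trace K L x := by
  have h := Algebra.trace_eq_of_algEquiv (FiniteField.frobeniusAlgEquivOfAlgebraic K L ^ n) x
  rwa [AlgEquiv.coe_pow, FiniteField.coe_frobeniusAlgEquivOfAlgebraic_iterate] at h

variable [Fintype L] {r : ℕ}

theorem trace_pow_card_pow_sub_mul (hL : Fintype.card L = Fintype.card K ^ r) {k : ℕ} (hk : k ≤ r)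
    (x y : L) :
    Algebra.trace K L (x ^ Fintype.card K ^ (r - k) * y) =
      Algebra.trace K L (x * y ^ Fintype.card K ^ k) := by
  have hx : (x ^ Fintype.card K ^ (r - k)) ^ Fintype.card K ^ k = x := by
    rw [← pow_mul, ← pow_add, Nat.sub_add_cancel hk, ← hL, FiniteField.pow_card]
  rw [← trace_pow_card_pow k, mul_pow, hx]

theorem trace_mul_symplectic_monomial (hL : Fintype.card L = Fintype.card K ^ r) {k : ℕ}
    (hk : k ≤ r) (l : ℕ) (b w m : L) :
    Algebra.trace K L
        (w * (b ^ Fintype.card K ^ (r - k) * w ^ Fintype.card K ^ l *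
          m ^ Fintype.card K ^ (r - k))) =
      Algebra.trace K L
        (m * (b * (w ^ Fintype.card K ^ k * w ^ Fintype.card K ^ (l + k)))) := by
  calc
    _ = Algebra.trace K L ((b * m) ^ Fintype.card K ^ (r - k) * (w * w ^ Fintype.card K ^ l)) := by
      rw [mul_pow]; ring_nf
    _ = Algebra.trace K L (b * m * (w * w ^ Fintype.card K ^ l) ^ Fintype.card K ^ k) :=
      trace_pow_card_pow_sub_mul hL hk _ _
    _ = _ := by
      rw [mul_pow, ← pow_mul w, ← pow_add]; ring_nf

theorem trace_mul_symplecticMul (hL : Fintype.card L = Fintype.card K ^ r) (c : K)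
    (a : Fin r → Fin r → L) (w m : L) :
    Algebra.trace K L (w * symplecticMul (Fintype.card K) (algebraMap K L c) a w m) =
      Algebra.trace K L (m * commutativeMul (Fintype.card K) (algebraMap K L c) a w w) := by
  rw [symplecticMul, commutativeMul, ← mul_add, mul_left_comm w, mul_left_comm m,
    ← Algebra.smul_def, ← Algebra.smul_def, map_smul, map_smul]
  congr 1
  simp only [← Finset.sum_add_distrib, Finset.mul_sum, map_sum]
  refine Finset.sum_congr rfl fun i _ => Finset.sum_congr rfl fun j _ => ?_
  split_ifs with hij
  · have hw : w ^ Fintype.card K ^ (r + (i : ℕ)) = w ^ Fintype.card K ^ (i : ℕ) := by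
      rw [pow_add, pow_mul, ← hL, FiniteField.pow_card]
    simp only [mul_add, map_add]
    rw [trace_mul_symplectic_monomial hL i.isLt.le, trace_mul_symplectic_monomial hL j.isLt.le,
      Nat.sub_add_cancel (Fin.le_def.mp hij), Nat.sub_add_cancel (by omega), hw]
  · simp

theorem knuth_symplectic_mub_eq_commutative_mub_general {M : Type*} [Monoid M] {q : ℕ}
    (hK : Fintype.card K = q) (hL : Fintype.card L = q ^ r) (ψ : AddChar K M) {c : L}
    (hc : c ∈ (algebraMap K L).range) (a : Fin r → Fin r → L) :
    (∀ w m : L, Algebra.trace K L (c * w * symplecticMul q c a w m) =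
      Algebra.trace K L (c * m * commutativeMul q c a w w)) ∧
    (∀ m v : L,
      (fun w : L => ψ (Algebra.trace K L (c * w * symplecticMul q c a w m + v * w))) =
      (fun w : L => ψ (Algebra.trace K L (c * m * commutativeMul q c a w w + v * w)))) := by
  subst hK
  obtain ⟨c, rfl⟩ := hc
  have trace_eq (w m : L) :
      Algebra.trace K L
          (algebraMap K L c * w * symplecticMul (Fintype.card K) (algebraMap K L c) a w m) =
        Algebra.trace K L
          (algebraMap K L c * m * commutativeMul (Fintype.card K) (algebraMap K L c) a w w) := by
    rw [mul_assoc, mul_assoc, ← Algebra.smul_def, ← Algebra.smul_def, map_smul, map_smul,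
      trace_mul_symplecticMul hL]
  exact ⟨trace_eq, fun m v => funext fun w => by simp only [map_add (Algebra.trace K L), trace_eq]⟩

end Trace

/-- **Proposition.** Let `F = 𝔽_q`, `q = p^r` odd, let
`x * y = 2⁻¹ ∑_{i≤j} a i j (x^{p^i} y^{p^j} + x^{p^j} y^{p^i})` be the commutative
presemifield multiplication associated with the quadratic planar polynomial
`f(x) = ∑_{i≤j} a i j x^{p^i + p^j}`, and let
`x ∘ y = 2⁻¹ ∑_{i≤j} a i j^{p^{r-i}} x^{p^{j-i}} y^{p^{r-i}}
       + 2⁻¹ ∑_{i≤j} a i j^{p^{r-j}} x^{p^{r+i-j}} y^{p^{r-j}}`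
be the symplectic presemifield multiplication obtained by Knuth's cubical array method.
Then `tr (2⁻¹ w (w ∘ m)) = tr (2⁻¹ m (w * w))` for all `w m ∈ F`.  In particular, for a
primitive `p`-th root of unity `ω`, the complete set of MUBs produced from `(F, +, ∘)`
coincides with the one produced from the planar function of `(F, +, *)`: the defining
vectors are literally equal. -/
theorem knuth_symplectic_mub_eq_commutative_mub
    (p r : ℕ) [Fact p.Prime] (hp : Odd p) (hr : 0 < r)
    (F : Type*) [Field F] [Fintype F] [CharP F p] [Algebra (ZMod p) F]
    (hcard : Fintype.card F = p ^ r)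
    (ω : ℂ) (hω : IsPrimitiveRoot ω p)
    (a : Fin r → Fin r → F)
    (cmul : F → F → F)
    (hcmul : ∀ x y : F, cmul x y =
      (2⁻¹ : F) * ∑ i : Fin r, ∑ j : Fin r, if i ≤ j then
          a i j * (x ^ p ^ (i : ℕ) * y ^ p ^ (j : ℕ) + x ^ p ^ (j : ℕ) * y ^ p ^ (i : ℕ))
        else 0)
    (circ : F → F → F)
    (hcirc : ∀ x y : F, circ x y =
      (2⁻¹ : F) * (∑ i : Fin r, ∑ j : Fin r, if i ≤ j then
          a i j ^ p ^ (r - (i : ℕ)) * x ^ p ^ ((j : ℕ) - (i : ℕ)) * y ^ p ^ (r - (i : ℕ))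
        else 0) +
      (2⁻¹ : F) * (∑ i : Fin r, ∑ j : Fin r, if i ≤ j then
          a i j ^ p ^ (r - (j : ℕ)) * x ^ p ^ (r + (i : ℕ) - (j : ℕ)) * y ^ p ^ (r - (j : ℕ))
        else 0)) :
    (∀ w m : F,
      Algebra.trace (ZMod p) F ((2⁻¹ : F) * w * circ w m) =
        Algebra.trace (ZMod p) F ((2⁻¹ : F) * m * cmul w w)) ∧
    (∀ m v : F,
      (fun w : F => ω ^ (Algebra.trace (ZMod p) F ((2⁻¹ : F) * w * circ w m + v * w)).val) =
      (fun w : F => ω ^ (Algebra.trace (ZMod p) F ((2⁻¹ : F) * m * cmul w w + v * w)).val)) := by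
  obtain rfl : cmul = commutativeMul p 2⁻¹ a := funext₂ hcmul
  obtain rfl : circ = symplecticMul p 2⁻¹ a := funext₂ hcirc
  exact knuth_symplectic_mub_eq_commutative_mub_general (ZMod.card p) hcard
    (AddChar.zmodChar p hω.pow_eq_one) ⟨2⁻¹, by rw [map_inv₀, map_ofNat]⟩ a
end

section
/- Let Σ be the BKLA symplectic spread of W = F ⊕ F consisting of the subspace {(0,y) : y ∈ F} and the subspaces W_m = {(x, m x^{ρ^{-1}} + m^ρ x^ρ) : x ∈ F} for m ∈ F, and let G = {σ_s : s ∈ F*} where σ_s(v,w) = (sv, s^{-1}w). Then Σ is G-invariant and G has exactly four orbits on Σ: the singleton {W_0} = {{(x,0) : x ∈ F}}; the singleton {{(0,y) : y ∈ F}}; the set of subspaces W_m with m a nonzero nonsquare of F; and the set of subspaces W_m with m a nonzero square of F. Moreover σ_s maps W_m to W_{s^{−1−ρ^{−1}} m}. -/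
/-!
Since `W_m` meets `{1} × F` in the single point `(1, m + ρ m)`, and `ρ x ≠ -x` makes `m ↦ m + ρ m`
injective, `W_m` determines `m`. As `σ_s` maps `W_m` to `W_{m / (s * ρ⁻¹ s)}`, the orbits on the
`W_m` with `m ≠ 0` are the cosets in `F*` of the image of `s ↦ s * ρ⁻¹ s`. The condition on `ρ`
gives this endomorphism of `F*` the same kernel as squaring, and endomorphisms of a finite cyclic
group with the same kernel have the same image. So the orbits are the cosets of the squares.
-/

section Squares

theorem subgroup_eq_of_card_eq {G : Type*} [CommGroup G] [IsCyclic G] [Finite G]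
    {H K : Subgroup G} (hcard : Nat.card H = Nat.card K) : H = K := by
  have eq_ker_pow (L : Subgroup G) : L = (powMonoidHom (Nat.card L) : G →* G).ker := by
    refine Subgroup.eq_of_le_of_card_ge (fun x hx => ?_) ?_
    · exact congrArg Subtype.val (pow_card_eq_one' (x := (⟨x, hx⟩ : L)))
    · rw [IsCyclic.card_powMonoidHom_ker, Nat.gcd_eq_right L.card_subgroup_dvd_card]
  rw [eq_ker_pow H, eq_ker_pow K, hcard]

theorem range_eq_range_of_ker_eq {G H : Type*} [Group G] [CommGroup H] [IsCyclic H] [Finite H]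
    {f g : G →* H} (hker : f.ker = g.ker) : f.range = g.range :=
  subgroup_eq_of_card_eq <| by rw [← Subgroup.index_ker, ← Subgroup.index_ker, hker]

theorem isSquare_iff_exists_ne_zero_sq {M₀ : Type*} [MonoidWithZero M₀] {u : M₀} (hu : u ≠ 0) :
    IsSquare u ↔ ∃ c : M₀, c ≠ 0 ∧ u = c ^ 2 := by
  rw [isSquare_iff_exists_sq]
  refine exists_congr fun c => (and_iff_right_of_imp ?_).symm
  rintro rfl
  exact ne_zero_pow two_ne_zero hu

theorem mul_map_eq_one_iff_sq_eq_one {K : Type*} [DivisionRing K] {τ : K →+* K}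
    (hτ : ∀ x, x ≠ 0 → τ x ≠ -x) {s : K} : s * τ s = 1 ↔ s ^ 2 = 1 := by
  constructor
  · intro h
    have hmap : τ s = s⁻¹ := eq_inv_of_mul_eq_one_right h
    -- `τ` negates `s - s⁻¹`
    have hself : s = s⁻¹ := by
      by_contra hne
      exact hτ (s - s⁻¹) (sub_ne_zero.mpr hne) (by simp [hmap])
    rw [sq, ← h, hmap, ← hself]
  · intro h
    rcases sq_eq_one_iff.mp h with rfl | rfl <;> simp

variable {F : Type*} [Field F]

theorem isSquare_mul_iff [Finite F] {a b : F} (ha : a ≠ 0) (hb : b ≠ 0) :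
    IsSquare (a * b) ↔ (IsSquare a ↔ IsSquare b) := by
  classical
  have := Fintype.ofFinite F
  rw [← quadraticChar_one_iff_isSquare ha, ← quadraticChar_one_iff_isSquare hb,
    ← quadraticChar_one_iff_isSquare (mul_ne_zero ha hb), map_mul]
  rcases quadraticChar_dichotomy ha with h | h <;>
    rcases quadraticChar_dichotomy hb with h' | h' <;> simp [h, h']

theorem isSquare_div_iff [Finite F] {a b : F} (ha : a ≠ 0) (hb : b ≠ 0) :
    IsSquare (a / b) ↔ (IsSquare a ↔ IsSquare b) := by
  rw [div_eq_mul_inv, isSquare_mul_iff ha (inv_ne_zero hb), isSquare_inv]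

theorem isSquare_iff_exists_mul_map [Finite F] {τ : F →+* F} (hτ : ∀ x, x ≠ 0 → τ x ≠ -x)
    {u : F} (hu : u ≠ 0) : IsSquare u ↔ ∃ s : F, s ≠ 0 ∧ u = s * τ s := by
  let mulMap : Fˣ →* Fˣ := MonoidHom.id Fˣ * Units.map τ
  have hrange : (powMonoidHom 2 : Fˣ →* Fˣ).range = mulMap.range := by
    refine range_eq_range_of_ker_eq (Subgroup.ext fun s => ?_)
    rw [MonoidHom.mem_ker, MonoidHom.mem_ker, Units.ext_iff, Units.ext_iff]
    exact (mul_map_eq_one_iff_sq_eq_one hτ).symm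
  lift u to Fˣ using hu.isUnit
  rw [isSquare_iff_exists_ne_zero_sq hu, ← Units.exists_iff_ne_zero, ← Units.exists_iff_ne_zero]
  simpa [MonoidHom.mem_range, Units.ext_iff, mulMap, eq_comm] using SetLike.ext_iff.mp hrange u

end Squares

section Components

variable {R : Type*} [Ring R]

/-- The component `W_m` of the BKLA spread. It is a plain set of points, because only its image
under maps is needed. -/
def bklaComponent (ρ : R ≃+* R) (m : R) : Set (R × R) :=
  {w | w.2 = m * ρ.symm w.1 + ρ m * ρ w.1}

theorem mk_one_mem_bklaComponent {ρ : R ≃+* R} {m y : R} :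
    (1, y) ∈ bklaComponent ρ m ↔ y = m + ρ m := by
  simp [bklaComponent]

theorem bklaComponent_injective {ρ : R ≃+* R} (hρ : ∀ x, x ≠ 0 → ρ x ≠ -x) :
    Function.Injective (bklaComponent ρ) := by
  intro m m' h
  have hsum : m + ρ m = m' + ρ m' := by
    rw [← mk_one_mem_bklaComponent, ← h, mk_one_mem_bklaComponent]
  by_contra hne
  refine hρ (m - m') (sub_ne_zero.mpr hne) ?_
  rw [map_sub, neg_sub, sub_eq_sub_iff_add_eq_add, add_comm, hsum]

theorem bklaComponent_ne_fst_eq_zero [Nontrivial R] (ρ : R ≃+* R) (m : R) :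
    bklaComponent ρ m ≠ {w | w.1 = 0} := by
  intro h
  have hmem : ((1 : R), m + ρ m) ∈ {w : R × R | w.1 = 0} :=
    h ▸ mk_one_mem_bklaComponent.mpr rfl
  exact one_ne_zero hmem

theorem symm_apply_ne_neg {ρ : R ≃+* R} (hρ : ∀ x, x ≠ 0 → ρ x ≠ -x) {x : R} (hx : x ≠ 0) :
    ρ.symm x ≠ -x := by
  rw [Ne, ρ.symm_apply_eq, map_neg, eq_comm, neg_eq_iff_eq_neg]
  exact hρ x hx

end Components

section Scaling

/-- The map `σ_s`, scaling the two summands of `W` by inverse factors. The group `G` consists of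
those with `s ≠ 0`; the junk value `0⁻¹ = 0` makes `σ_0` the zero map. -/
def hyperbolicScaling {G₀ : Type*} [GroupWithZero G₀] (s : G₀) (w : G₀ × G₀) : G₀ × G₀ :=
  (s * w.1, s⁻¹ * w.2)

theorem hyperbolicScaling_image_eq_preimage {G₀ : Type*} [GroupWithZero G₀] {s : G₀} (hs : s ≠ 0)
    (A : Set (G₀ × G₀)) : hyperbolicScaling s '' A = hyperbolicScaling s⁻¹ ⁻¹' A := by
  apply congrFun (Set.image_eq_preimage_of_inverse _ _) <;> intro w <;> simp [hyperbolicScaling, hs]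

theorem hyperbolicScaling_image_fst_eq_zero {G₀ : Type*} [GroupWithZero G₀] {s : G₀} (hs : s ≠ 0) :
    hyperbolicScaling s '' {w | w.1 = 0} = {w | w.1 = 0} := by
  rw [hyperbolicScaling_image_eq_preimage hs]
  ext w
  simp [hyperbolicScaling, hs]

variable {F : Type*} [Field F] {ρ : F ≃+* F}

theorem hyperbolicScaling_image_bklaComponent {s : F} (hs : s ≠ 0) (m : F) :
    hyperbolicScaling s '' bklaComponent ρ m = bklaComponent ρ (s⁻¹ * (ρ.symm s)⁻¹ * m) := by
  have hρs' : ρ.symm s ≠ 0 := ρ.symm.map_ne_zero_iff.mpr hs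
  rw [hyperbolicScaling_image_eq_preimage hs]
  ext ⟨x, y⟩
  simp only [hyperbolicScaling, bklaComponent, Set.mem_preimage, Set.mem_ofPred_eq, map_mul,
    map_inv₀, inv_inv, RingEquiv.apply_symm_apply]
  field_simp

theorem hyperbolicScaling_image_bklaComponent_eq_iff (hρ : ∀ x, x ≠ 0 → ρ x ≠ -x) {s m m' : F}
    (hs : s ≠ 0) (hm' : m' ≠ 0) :
    hyperbolicScaling s '' bklaComponent ρ m = bklaComponent ρ m' ↔ m / m' = s * ρ.symm s := by
  have hρs' : ρ.symm s ≠ 0 := ρ.symm.map_ne_zero_iff.mpr hs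
  rw [hyperbolicScaling_image_bklaComponent hs, (bklaComponent_injective hρ).eq_iff, ← mul_inv,
    inv_mul_eq_iff_eq_mul₀ (mul_ne_zero hs hρs'), div_eq_iff hm']

theorem exists_hyperbolicScaling_image_bklaComponent_eq_iff [Finite F]
    (hρ : ∀ x, x ≠ 0 → ρ x ≠ -x) {m m' : F} (hm : m ≠ 0) (hm' : m' ≠ 0) :
    (∃ s : F, s ≠ 0 ∧ hyperbolicScaling s '' bklaComponent ρ m = bklaComponent ρ m') ↔
      (IsSquare m ↔ IsSquare m') := by
  have hsymm : ∀ x, x ≠ 0 → (ρ.symm : F →+* F) x ≠ -x := fun _ => symm_apply_ne_neg hρ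
  rw [← isSquare_div_iff hm hm', isSquare_iff_exists_mul_map hsymm (div_ne_zero hm hm')]
  exact exists_congr fun s =>
    and_congr_right fun hs => hyperbolicScaling_image_bklaComponent_eq_iff hρ hs hm'

end Scaling

/-- **Lemma.** Let `F = 𝔽_q` be a finite field of odd order and `ρ` a nontrivial field
automorphism of `F` with `-1 ∉ (F*)^{ρ-1}` (i.e. `ρ x ≠ -x` for all `x ≠ 0`).  Consider
the BKLA symplectic spread of `W = F ⊕ F` consisting of `Y = {(0,y)}` and the subspaces
`W_m = {(x, m x^{ρ⁻¹} + m^ρ x^ρ) : x ∈ F}`, `m ∈ F`, and the group `G = {σ_s : s ∈ F*}`,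
`σ_s (v, w) = (s v, s⁻¹ w)`.  Then the spread is `G`-invariant, `σ_s` maps `W_m` to
`W_{s^{-1-ρ⁻¹} m}`, and `G` has exactly four orbits on the spread: `{W_0}` (i.e.
`{(x,0)}`), `{Y}`, the subspaces `W_m` with `m` a nonzero nonsquare, and the subspaces
`W_m` with `m` a nonzero square. -/
theorem bkla_spread_four_orbits
    (F : Type*) [Field F] [Fintype F] (hodd : Odd (Fintype.card F))
    (ρ : F ≃+* F) (hρ : ρ ≠ RingEquiv.refl F)
    (hm1 : ∀ x : F, x ≠ 0 → ρ x ≠ -x)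
    (Wm : F → Set (F × F))
    (hWm : ∀ m, Wm m = {w : F × F | w.2 = m * ρ.symm w.1 + ρ m * ρ w.1})
    (Y : Set (F × F)) (hY : Y = {w : F × F | w.1 = 0})
    (σ : F → F × F → F × F) (hσ : ∀ s w, σ s w = (s * w.1, s⁻¹ * w.2)) :
    -- `σ_s` maps `W_m` to `W_{s^{-1-ρ⁻¹} m}`; in particular the spread is `G`-invariant
    (∀ s : F, s ≠ 0 → ∀ m : F, σ s '' Wm m = Wm (s⁻¹ * (ρ.symm s)⁻¹ * m)) ∧
    (∀ s : F, s ≠ 0 → σ s '' Y = Y) ∧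
    -- `{W_0}` and `{Y}` are singleton orbits
    (∀ s : F, s ≠ 0 → σ s '' Wm 0 = Wm 0) ∧
    -- the four orbits are distinct
    (Wm 0 ≠ Y) ∧
    (∀ m : F, m ≠ 0 → Wm m ≠ Wm 0 ∧ Wm m ≠ Y) ∧
    -- two subspaces `W_m`, `W_{m'}` (`m, m' ≠ 0`) lie in the same `G`-orbit iff
    -- `m` and `m'` are both squares or both nonsquares
    (∀ m m' : F, m ≠ 0 → m' ≠ 0 →
      ((∃ s : F, s ≠ 0 ∧ σ s '' Wm m = Wm m') ↔
        ((∃ c : F, c ≠ 0 ∧ m = c ^ 2) ↔ (∃ c : F, c ≠ 0 ∧ m' = c ^ 2)))) := by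
  obtain rfl : Wm = bklaComponent ρ := funext hWm
  obtain rfl : σ = hyperbolicScaling := funext₂ hσ
  subst hY
  refine ⟨fun s hs m => hyperbolicScaling_image_bklaComponent hs m,
    fun s hs => hyperbolicScaling_image_fst_eq_zero hs,
    fun s hs => by rw [hyperbolicScaling_image_bklaComponent hs, mul_zero],
    bklaComponent_ne_fst_eq_zero ρ 0,
    fun m hm => ⟨(bklaComponent_injective hm1).ne hm, bklaComponent_ne_fst_eq_zero ρ m⟩,
    fun m m' hm hm' => ?_⟩
  rw [← isSquare_iff_exists_ne_zero_sq hm, ← isSquare_iff_exists_ne_zero_sq hm']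
  exact exists_hyperbolicScaling_image_bklaComponent_eq_iff hm1 hm hm'
end

section
/- Let F be a finite field of odd order and ρ a field automorphism of F of odd order t. Define β : F → F by β(v) = (1/2)(a_0 v + a_1 v^ρ + ⋯ + a_{t−1} v^{ρ^{t−1}}), where for t ≡ 1 (mod 4) the signs are a_{4i} = a_{4i+1} = 1 and a_{4i+2} = a_{4i+3} = −1 (i ≥ 0), and for t ≡ 3 (mod 4) they are a_{4i} = a_{4i+3} = −1 and a_{4i+1} = a_{4i+2} = 1 (i ≥ 0). Then β(v)^{ρ^{-1}} + β(v)^{ρ} = v for all v ∈ F; that is, β is the inverse of the map α(u) = u^{ρ^{-1}} + u^{ρ}. -/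
open scoped BigOperators

/-!
If `ρ ^ t = 1`, then inverting `ρ⁻¹ + ρ` amounts to inverting `1 + ρ ^ 2`.  For signs with
`a (j + 2) = -a j`, the product of `1 + ρ ^ 2` with `∑ j < t, a j ρ ^ j` telescopes to
`(a 0 - a t) + (a 1 - a (t + 1)) ρ`.  The two sign patterns, according to `t` modulo `4`, are the
ones with `a 1 = 1` for which the constant term vanishes and the coefficient of `ρ` is `2`.
-/

open Finset Function

section Telescoping

variable {S M : Type*} [Ring S] [AddCommGroup M] [Module S M] {a : ℕ → S} {u : ℕ → M}

theorem sum_range_smul_add_shift_of_antiperiodic {k : ℕ} (ha : Antiperiodic a k) (u : ℕ → M)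
    (n : ℕ) :
    ∑ j ∈ range n, a j • (u j + u (j + k)) =
      ∑ i ∈ range k, a i • u i - ∑ i ∈ range k, a (n + i) • u (n + i) := by
  have hterm (j : ℕ) :
      a j • (u j + u (j + k)) = a j • u j - a (k + j) • u (k + j) := by
    rw [add_comm k j, ha, neg_smul, sub_neg_eq_add, smul_add]
  simp only [hterm, sum_sub_distrib]
  rw [sub_eq_sub_iff_add_eq_add, ← sum_range_add, ← sum_range_add, add_comm]

theorem sum_range_smul_add_shift_two_of_periodic {t : ℕ} (ha : Antiperiodic a 2)
    (ha_zero : a t = a 0) (ha_one : a (t + 1) = -a 1) (hu : Periodic u t) :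
    ∑ j ∈ range t, a j • (u j + u (j + 2)) = (2 * a 1) • u 1 := by
  have hu_zero : u t = u 0 := hu.eq
  have hu_one : u (t + 1) = u 1 := by rw [add_comm, hu]
  rw [sum_range_smul_add_shift_of_antiperiodic ha]
  simp only [sum_range_succ, range_zero, sum_empty, zero_add, add_zero, ha_zero, ha_one,
    hu_zero, hu_one, neg_smul, two_mul, add_smul]
  abel

end Telescoping

/-- The sign of the `j`-th power of an automorphism `ρ` of odd order `t` in twice the inverse of
`ρ⁻¹ + ρ`, as an integer: `1, 1, -1, -1, …` if `t % 4 = 1` and `-1, 1, 1, -1, …` if `t % 4 = 3`.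
Even `t`, for which the notion is not meant, get the second pattern. -/
def alphaInvSign (t j : ℕ) : ℤ :=
  if t % 4 = 1 then if j % 4 = 0 ∨ j % 4 = 1 then 1 else -1
  else if j % 4 = 1 ∨ j % 4 = 2 then 1 else -1

theorem alphaInvSign_antiperiodic (t : ℕ) : Antiperiodic (alphaInvSign t) 2 := by
  intro j
  unfold alphaInvSign
  split_ifs <;> omega

theorem alphaInvSign_one (t : ℕ) : alphaInvSign t 1 = 1 := by
  simp [alphaInvSign]

theorem alphaInvSign_self {t : ℕ} (ht : Odd t) : alphaInvSign t t = alphaInvSign t 0 := by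
  rcases Nat.odd_mod_four_iff.mp (Nat.odd_iff.mp ht) with h | h <;> simp [alphaInvSign, h]

theorem alphaInvSign_self_add_one {t : ℕ} (ht : Odd t) : alphaInvSign t (t + 1) = -1 := by
  rw [Nat.odd_iff] at ht
  unfold alphaInvSign
  split_ifs <;> omega

section Action

variable {G M : Type*} [AddCommGroup M]

/-- The sum `∑ j < t, ± g ^ j • v` with the signs `alphaInvSign t`; for `g` the automorphism `ρ`
this is twice the map `β`. -/
def signedOrbitSum [Monoid G] [DistribMulAction G M] (t : ℕ) (g : G) (v : M) : M :=
  ∑ j ∈ range t, alphaInvSign t j • g ^ j • v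

theorem signedOrbitSum_add [Monoid G] [DistribMulAction G M] (t : ℕ) (g : G) (v w : M) :
    signedOrbitSum t g (v + w) = signedOrbitSum t g v + signedOrbitSum t g w := by
  simp only [signedOrbitSum, smul_add, sum_add_distrib]

theorem smul_signedOrbitSum_of_commute [Monoid G] [DistribMulAction G M] {g h : G}
    (hgh : Commute h g) (t : ℕ) (v : M) :
    h • signedOrbitSum t g v = signedOrbitSum t g (h • v) := by
  simp only [signedOrbitSum, smul_sum, smul_comm h (alphaInvSign t _), smul_smul,
    (hgh.pow_right _).eq]

variable [Group G] [DistribMulAction G M] {g : G} {t : ℕ}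

theorem signedOrbitSum_inv_smul_add_smul (ht : Odd t) (hg : g ^ t = 1) (v : M) :
    signedOrbitSum t g (g⁻¹ • v + g • v) = (2 : ℤ) • v := by
  have hperiodic : Periodic (fun j ↦ g ^ j • g⁻¹ • v) t := fun j ↦ by
    simp only [pow_add, hg, mul_one]
  have hshift (j : ℕ) : g ^ j • g • v = g ^ (j + 2) • g⁻¹ • v := by
    simp only [pow_succ, mul_smul, smul_inv_smul]
  have hsum := sum_range_smul_add_shift_two_of_periodic (alphaInvSign_antiperiodic t)
    (alphaInvSign_self ht) (by rw [alphaInvSign_self_add_one ht, alphaInvSign_one]) hperiodic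
  simpa only [signedOrbitSum, smul_add, hshift, alphaInvSign_one, mul_one, pow_one,
    smul_inv_smul] using hsum

theorem inv_smul_signedOrbitSum_add_smul (ht : Odd t) (hg : g ^ t = 1) (v : M) :
    g⁻¹ • signedOrbitSum t g v + g • signedOrbitSum t g v = (2 : ℤ) • v := by
  rw [smul_signedOrbitSum_of_commute (Commute.refl g).inv_left,
    smul_signedOrbitSum_of_commute (Commute.refl g), ← signedOrbitSum_add,
    signedOrbitSum_inv_smul_add_smul ht hg]

end Action

theorem map_invOf_two_mul {F R S : Type*} [NonAssocSemiring R] [Semiring S] [Invertible (2 : R)]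
    [Invertible (2 : S)] [FunLike F R S] [AddHomClass F R S] (f : F) (x : R) :
    f (⅟2 * x) = ⅟2 * f x := by
  refine mul_left_eq_iff_eq_invOf_mul.mp ?_
  rw [two_mul, ← map_add, ← add_mul, invOf_two_add_invOf_two, one_mul]

theorem two_ne_zero_of_odd_card {R : Type*} [Ring R] [Nontrivial R] [Fintype R]
    (hodd : Odd (Fintype.card R)) : (2 : R) ≠ 0 := by
  intro htwo
  obtain ⟨k, hk⟩ := hodd
  have hcard : (Fintype.card R : R) = 0 := Nat.cast_card_eq_zero R
  simp [hk, htwo] at hcard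

theorem inverse_of_alpha_explicit_general
    {R : Type*} [Ring R] [Invertible (2 : R)]
    (ρ : RingAut R) (t : ℕ) (hρ : ρ ^ t = 1) (ht : Odd t)
    (a : ℕ → R)
    (ha1 : t % 4 = 1 → ∀ j, a j = if j % 4 = 0 ∨ j % 4 = 1 then 1 else -1)
    (ha3 : t % 4 = 3 → ∀ j, a j = if j % 4 = 1 ∨ j % 4 = 2 then 1 else -1)
    (β : R → R)
    (hβ : ∀ v : R, β v = ⅟2 * ∑ j ∈ range t, a j * (ρ ^ j) v) :
    (∀ v : R, ρ⁻¹ (β v) + ρ (β v) = v) ∧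
    Bijective (fun u : R ↦ ρ⁻¹ u + ρ u) ∧
    (∀ u : R, β (ρ⁻¹ u + ρ u) = u) := by
  have ha (j : ℕ) : a j = (alphaInvSign t j : R) := by
    rcases Nat.odd_mod_four_iff.mp (Nat.odd_iff.mp ht) with h | h
    · simp [alphaInvSign, ha1 h, h]
    · simp [alphaInvSign, ha3 h, h]
  have hβ_sum (v : R) : β v = ⅟2 * signedOrbitSum t ρ v := by
    simp only [hβ, ha, signedOrbitSum, zsmul_eq_mul, RingAut.smul_def]
  have hhalf (v : R) : ⅟2 * ((2 : ℤ) • v) = v := by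
    rw [zsmul_eq_mul, Int.cast_ofNat, invOf_mul_cancel_left]
  have hright (v : R) : ρ⁻¹ (β v) + ρ (β v) = v := calc
    ρ⁻¹ (β v) + ρ (β v)
      = ⅟2 * (ρ⁻¹ • signedOrbitSum t ρ v + ρ • signedOrbitSum t ρ v) := by
        simp only [hβ_sum, map_invOf_two_mul, mul_add, RingAut.smul_def]
    _ = ⅟2 * ((2 : ℤ) • v) := by rw [inv_smul_signedOrbitSum_add_smul ht hρ]
    _ = v := hhalf v
  have hleft (u : R) : β (ρ⁻¹ u + ρ u) = u := calc
    β (ρ⁻¹ u + ρ u) = ⅟2 * signedOrbitSum t ρ (ρ⁻¹ • u + ρ • u) := hβ_sum _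
    _ = ⅟2 * ((2 : ℤ) • u) := by rw [signedOrbitSum_inv_smul_add_smul ht hρ]
    _ = u := hhalf u
  exact ⟨hright, bijective_iff_has_inverse.mpr ⟨β, hleft, hright⟩, hleft⟩

/-- **Lemma.** Let `F` be a finite field of odd order and `ρ` a field automorphism of `F`
of odd order `t`.  Define `β v = 2⁻¹ (a 0 • v + a 1 • v^ρ + ⋯ + a (t-1) • v^{ρ^{t-1}})`,
where for `t ≡ 1 (mod 4)` the signs are `a_{4i} = a_{4i+1} = 1`, `a_{4i+2} = a_{4i+3} = -1`
and for `t ≡ 3 (mod 4)` they are `a_{4i} = a_{4i+3} = -1`, `a_{4i+1} = a_{4i+2} = 1`.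
Then `β(v)^{ρ⁻¹} + β(v)^ρ = v` for all `v`; that is, `β` is the (two-sided) inverse of the
map `α(u) = u^{ρ⁻¹} + u^ρ`. -/
theorem inverse_of_alpha_explicit
    (F : Type*) [Field F] [Fintype F] (hodd : Odd (Fintype.card F))
    (ρ : RingAut F) (t : ℕ) (ht : orderOf ρ = t) (htodd : Odd t)
    (a : ℕ → F)
    (ha1 : t % 4 = 1 → ∀ j, a j = if j % 4 = 0 ∨ j % 4 = 1 then 1 else -1)
    (ha3 : t % 4 = 3 → ∀ j, a j = if j % 4 = 1 ∨ j % 4 = 2 then 1 else -1)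
    (β : F → F)
    (hβ : ∀ v : F, β v = (2⁻¹ : F) * ∑ j ∈ Finset.range t, a j * (ρ ^ j) v) :
    (∀ v : F, ρ⁻¹ (β v) + ρ (β v) = v) ∧
    Function.Bijective (fun u : F => ρ⁻¹ u + ρ u) ∧
    (∀ u : F, β (ρ⁻¹ u + ρ u) = u) := by
  have : Invertible (2 : F) := invertibleOfNonzero (two_ne_zero_of_odd_card hodd)
  exact inverse_of_alpha_explicit_general ρ t (ht ▸ pow_orderOf_eq_one ρ) htodd a ha1 ha3 β
    (by simpa only [invOf_eq_inv] using hβ)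
end

section
/- Let F = 𝔽_q with q = q₁^t odd, t odd, and let ρ be a nontrivial automorphism of F with −1 not of the form x^{ρ−1} for x ∈ F*. Let β : F → F be the inverse of the map α(u) = u^{ρ^{-1}} + u^{ρ}. Then the following family of q+1 subsets of W = F ⊕ F is a symplectic spread with respect to the form ⟨(u,v),(u',v')⟩ = tr(uv' − vu'): the subspace {(x,0) : x ∈ F}; the subspace {(0,y) : y ∈ F}; the subspaces {(x, m x^{ρ^{-1}} + m^ρ x^ρ) : x ∈ F} for each nonzero nonsquare m ∈ F; and the subspaces {(x, s·β(xs)) : x ∈ F} for s ranging over a set of representatives of F*/{±1}. That is, each member is a totally isotropic 𝔽_p-subspace of W and every nonzero element of W lies in exactly one member. -/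
/-!
Write `α = (u ↦ u^{ρ⁻¹} + u^ρ)` and `L_m = (x ↦ m x^{ρ⁻¹} + m^ρ x^ρ)`. Since `-1 ∉ (F*)^{ρ-1}`, the
product `L_m x` has no zero divisors, so the graphs of the `L_m` together with the vertical line
form the BKLA spread; it is symplectic because each `L_m` is self-adjoint for the trace form.

The map `d ↦ d d^{ρ⁻¹}` sends `F*` onto the nonzero squares with fibres `{±d}`, and for
`m = d d^{ρ⁻¹}` one has `L_m = d α d` (composition with multiplications by `d`). If
`d = y / (s x)`, then `d α d` maps `x` to `y` exactly when `s α⁻¹ s` does. Hence the net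
`{L_m | m ≠ 0 a square}` covers the same points as the graphs of `s α⁻¹ s`, where `s` runs over
`F* / {±1}`, and replacing the former by the latter turns the BKLA spread into another spread.
Every `s α⁻¹ s` is again self-adjoint.
-/

section SpreadSet

variable {K V W : Type*} [Semiring K] [AddCommMonoid V] [AddCommMonoid W] [Module K V] [Module K W]

/-- A spread set of linear maps `V → W`: evaluation at any nonzero vector of `V` is a bijection
from the set onto `W`. -/
def IsSpreadSet (𝒜 : Set (V →ₗ[K] W)) : Prop :=
  ∀ x, x ≠ 0 → ∀ y, ∃! A, A ∈ 𝒜 ∧ A x = y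

/-- The spread of `V × W` defined by a spread set `𝒜`: the vertical subspace `0 × W` and the graphs
of the elements of `𝒜`. The members are encoded as plain sets of points. -/
def graphSpread (𝒜 : Set (V →ₗ[K] W)) : Set (Set (V × W)) :=
  insert {w | w.1 = 0} ((fun A => {w | w.2 = A w.1}) '' 𝒜)

variable {𝒜 𝒩 𝒩' : Set (V →ₗ[K] W)}

theorem IsSpreadSet.replaceNet (h𝒜 : IsSpreadSet 𝒜) (h𝒩 : 𝒩 ⊆ 𝒜)
    (hold : ∀ x, x ≠ 0 → ∀ B ∈ 𝒩', ∃ A ∈ 𝒩, A x = B x)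
    (hnew : ∀ x, x ≠ 0 → ∀ A ∈ 𝒩, ∃! B, B ∈ 𝒩' ∧ B x = A x) :
    IsSpreadSet (𝒜 \ 𝒩 ∪ 𝒩') := by
  intro x hx y
  obtain ⟨A, ⟨hA, rfl⟩, hAuniq⟩ := h𝒜 x hx y
  by_cases hA𝒩 : A ∈ 𝒩
  · obtain ⟨B, ⟨hB, hBA⟩, hBuniq⟩ := hnew x hx A hA𝒩
    refine ⟨B, ⟨Or.inr hB, hBA⟩, ?_⟩
    rintro C ⟨hC | hC, hCA⟩
    · exact absurd (hAuniq C ⟨hC.1, hCA⟩ ▸ hA𝒩) hC.2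
    · exact hBuniq C ⟨hC, hCA⟩
  · refine ⟨A, ⟨Or.inl ⟨hA, hA𝒩⟩, rfl⟩, ?_⟩
    rintro C ⟨hC | hC, hCA⟩
    · exact hAuniq C ⟨hC.1, hCA⟩
    · obtain ⟨A', hA', hA'C⟩ := hold x hx C hC
      exact absurd (hAuniq A' ⟨h𝒩 hA', hA'C.trans hCA⟩ ▸ hA') hA𝒩

theorem IsSpreadSet.existsUnique_mem_graphSpread (h𝒜 : IsSpreadSet 𝒜) {w : V × W} (hw : w ≠ 0) :
    ∃! M, M ∈ graphSpread 𝒜 ∧ w ∈ M := by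
  obtain ⟨x, y⟩ := w
  by_cases hx : x = 0
  · subst hx
    refine ⟨{w | w.1 = 0}, ⟨Set.mem_insert _ _, rfl⟩, ?_⟩
    rintro _ ⟨rfl | ⟨A, -, rfl⟩, hyA⟩
    · rfl
    · have hy : y = 0 := Eq.trans hyA (map_zero A)
      exact absurd (congrArg (Prod.mk 0) hy) hw
  · obtain ⟨A, ⟨hA, hAx⟩, hAuniq⟩ := h𝒜 x hx y
    refine ⟨{w | w.2 = A w.1}, ⟨Set.mem_insert_of_mem _ ⟨A, hA, rfl⟩, hAx.symm⟩, ?_⟩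
    rintro _ ⟨rfl | ⟨B, hB, rfl⟩, hyB⟩
    · exact absurd hyB hx
    · rw [hAuniq B ⟨hB, Eq.symm hyB⟩]

theorem IsSpreadSet.ncard_eq [Nontrivial V] (h𝒜 : IsSpreadSet 𝒜) : 𝒜.ncard = Nat.card W := by
  obtain ⟨x, hx⟩ := exists_ne (0 : V)
  rw [← Set.ncard_univ]
  refine Set.ncard_congr (fun A _ => A x) (fun _ _ => Set.mem_univ _) ?_ ?_
  · exact fun A B hA hB hAB => (h𝒜 x hx (B x)).unique ⟨hA, hAB⟩ ⟨hB, rfl⟩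
  · intro y _
    obtain ⟨A, ⟨hA, hAx⟩, -⟩ := h𝒜 x hx y
    exact ⟨A, hA, hAx⟩

theorem IsSpreadSet.ncard_graphSpread [Nontrivial V] [Finite W] (h𝒜 : IsSpreadSet 𝒜) :
    (graphSpread 𝒜).ncard = Nat.card W + 1 := by
  have hinj : Function.Injective fun A : V →ₗ[K] W => {w : V × W | w.2 = A w.1} := by
    intro A B hAB
    ext x
    exact (Set.ext_iff.mp hAB (x, A x)).mp rfl
  have hvert : {w : V × W | w.1 = 0} ∉ (fun A : V →ₗ[K] W => {w : V × W | w.2 = A w.1}) '' 𝒜 := by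
    rintro ⟨A, -, hA⟩
    obtain ⟨x, hx⟩ := exists_ne (0 : V)
    exact hx ((Set.ext_iff.mp hA (x, A x)).mp rfl)
  have hfin : 𝒜.Finite := Set.finite_of_ncard_ne_zero (h𝒜.ncard_eq ▸ Nat.card_pos.ne')
  rw [graphSpread, Set.ncard_insert_of_notMem hvert (hfin.image _),
    Set.ncard_image_of_injective _ hinj, h𝒜.ncard_eq]

end SpreadSet

section SymplecticSpread

variable {K E : Type*} [CommRing K] [CommRing E] [Algebra K E]

variable (K) in
/-- A symplectic spread of the `K`-space `E ⊕ E` for the alternating form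
`⟨(u, v), (u', v')⟩ = tr (u v' - v u')`, where `tr` is the trace of `E` over `K`. The members are
encoded as sets of points. -/
structure IsSymplecticSpread (𝒮 : Set (Set (E × E))) : Prop where
  exists_submodule : ∀ M ∈ 𝒮, ∃ S : Submodule K (E × E), (S : Set (E × E)) = M
  isotropic : ∀ M ∈ 𝒮, ∀ u ∈ M, ∀ w ∈ M, Algebra.trace K E (u.1 * w.2 - u.2 * w.1) = 0
  existsUnique_mem : ∀ w : E × E, w ≠ 0 → ∃! M, M ∈ 𝒮 ∧ w ∈ M
  ncard_eq : 𝒮.ncard = Nat.card E + 1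

theorem IsSpreadSet.isSymplecticSpread_graphSpread [Nontrivial E] [Finite E]
    {𝒜 : Set (E →ₗ[K] E)} (h𝒜 : IsSpreadSet 𝒜)
    (hadj : ∀ A ∈ 𝒜, (Algebra.traceForm K E).IsSelfAdjoint A) :
    IsSymplecticSpread K (graphSpread 𝒜) where
  exists_submodule := by
    rintro _ (rfl | ⟨A, -, rfl⟩)
    · exact ⟨LinearMap.ker (LinearMap.fst K E E), rfl⟩
    · exact ⟨A.graph, rfl⟩
  isotropic := by
    rintro _ (rfl | ⟨A, hA, rfl⟩) ⟨x, y⟩ hu ⟨x', y'⟩ hw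
    · obtain rfl : x = 0 := hu
      obtain rfl : x' = 0 := hw
      simp
    · obtain rfl : y = A x := hu
      obtain rfl : y' = A x' := hw
      rw [map_sub, sub_eq_zero]
      exact (hadj A hA x x').symm
  existsUnique_mem _ := h𝒜.existsUnique_mem_graphSpread
  ncard_eq := h𝒜.ncard_graphSpread

end SymplecticSpread

theorem isSelfAdjoint_symm {K V : Type*} [CommSemiring K] [AddCommMonoid V] [Module K V]
    {B : LinearMap.BilinForm K V} {e : V ≃ₗ[K] V} (he : B.IsSelfAdjoint e) :
    B.IsSelfAdjoint e.symm := by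
  intro x y
  simpa using (he (e.symm x) (e.symm y)).symm

section MulCongr

variable {K A : Type*} [CommRing K] [CommRing A] [Algebra K A]

/-- The congruence transform `x ↦ s f(x s)` of a linear map `f` by the multiplication by `s`. -/
def mulCongr (s : A) (f : A →ₗ[K] A) : A →ₗ[K] A :=
  LinearMap.mulLeft K s ∘ₗ f ∘ₗ LinearMap.mulRight K s

@[simp]
theorem mulCongr_apply (s : A) (f : A →ₗ[K] A) (x : A) : mulCongr s f x = s * f (x * s) :=
  rfl

@[simp]
theorem mulCongr_neg (s : A) (f : A →ₗ[K] A) : mulCongr (-s) f = mulCongr s f := by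
  ext x
  simp

theorem isSelfAdjoint_mulCongr {f : A →ₗ[K] A} (hf : (Algebra.traceForm K A).IsSelfAdjoint f)
    (s : A) : (Algebra.traceForm K A).IsSelfAdjoint (mulCongr s f) := by
  intro x y
  have h := hf (x * s) (y * s)
  simp only [Algebra.traceForm_apply] at h ⊢
  convert h using 2 <;> simp only [mulCongr_apply] <;> ring

theorem mulCongr_linearEquiv_ne_zero [IsDomain A] (e : A ≃ₗ[K] A) {s x : A} (hs : s ≠ 0)
    (hx : x ≠ 0) : mulCongr s e.toLinearMap x ≠ 0 := by
  simp [hs, hx]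

theorem mulCongr_symm_apply_eq_iff {F : Type*} [Field F] [Algebra K F] (e : F ≃ₗ[K] F)
    {s x y : F} (hs : s ≠ 0) (hx : x ≠ 0) (hy : y ≠ 0) :
    mulCongr s e.symm.toLinearMap x = y ↔ mulCongr (y / (s * x)) e.toLinearMap x = y := by
  have harg : x * (y / (s * x)) = y / s := by field_simp
  calc mulCongr s e.symm.toLinearMap x = y
      ↔ e.symm (x * s) = y / s := by
        rw [eq_div_iff hs, mul_comm _ s]; rfl
    _ ↔ e (y / s) = x * s := by rw [e.symm_apply_eq, eq_comm]
    _ ↔ mulCongr (y / (s * x)) e.toLinearMap x = y := by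
        rw [mulCongr_apply, harg, div_mul_eq_mul_div, div_eq_iff (mul_ne_zero hs hx),
          mul_right_inj' hy, mul_comm x]; rfl

end MulCongr

section TwistedSquare

variable {K A : Type*} [CommRing K] [CommRing A] [Algebra K A] (ρ : A ≃ₐ[K] A)

/-- The twisted square `d ↦ d d^{ρ⁻¹}`. -/
def twistedSquare : A →*₀ A where
  toFun d := d * ρ.symm d
  map_zero' := by simp
  map_one' := by simp
  map_mul' d e := by simp only [map_mul]; ring

theorem twistedSquare_apply (d : A) : twistedSquare ρ d = d * ρ.symm d :=
  rfl

variable {F : Type*} [Field F] [Algebra K F] {ρ : F ≃ₐ[K] F}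

theorem twistedSquare_eq_iff (hρ : ∀ x, x ≠ 0 → ρ x ≠ -x) {d e : F} :
    twistedSquare ρ d = twistedSquare ρ e ↔ d = e ∨ d = -e := by
  refine ⟨fun h => ?_, ?_⟩
  · by_contra! hne
    have hsub : d - e ≠ 0 := sub_ne_zero.mpr hne.1
    have hadd : d + e ≠ 0 := fun h => hne.2 (eq_neg_of_add_eq_zero_left h)
    have hadd' : ρ.symm d + ρ.symm e ≠ 0 := by rwa [← map_add, map_ne_zero]
    refine hρ (ρ.symm ((d - e) / (d + e))) ((map_ne_zero _).mpr (div_ne_zero hsub hadd)) ?_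
    rw [ρ.apply_symm_apply, map_div₀, map_sub, map_add, ← neg_div, div_eq_div_iff hadd hadd']
    rw [twistedSquare_apply, twistedSquare_apply] at h
    linear_combination 2 * h
  · rintro (rfl | rfl) <;> simp [twistedSquare_apply]

variable [Finite F]

variable (ρ) in
theorem isSquare_twistedSquare (d : F) : IsSquare (twistedSquare ρ d) := by
  classical
  have := Fintype.ofFinite F
  by_cases hd : IsSquare d
  · exact hd.mul (hd.map ρ.symm)
  · have hd' : ¬IsSquare (ρ.symm d) := fun h => hd (by simpa using h.map ρ)
    have hτd : twistedSquare ρ d ≠ 0 := by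
      rw [map_ne_zero]
      rintro rfl
      exact hd IsSquare.zero
    rw [← quadraticChar_one_iff_isSquare hτd, twistedSquare_apply, map_mul,
      quadraticChar_neg_one_iff_not_isSquare.mpr hd,
      quadraticChar_neg_one_iff_not_isSquare.mpr hd', neg_one_mul, neg_neg]

-- `d ↦ d d^{ρ⁻¹}` and `d ↦ d²` have the same fibres `{±d}`, hence ranges of the same size.
theorem range_twistedSquare (hρ : ∀ x, x ≠ 0 → ρ x ≠ -x) :
    Set.range (twistedSquare ρ) = {m | IsSquare m} := by
  have hsq : Set.range (fun d : F => d ^ 2) = {m | IsSquare m} := by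
    ext m
    simp only [Set.mem_range, Set.mem_ofPred_eq, isSquare_iff_exists_sq, eq_comm]
  have hker : Setoid.ker (twistedSquare ρ) = Setoid.ker (fun d : F => d ^ 2) := by
    ext d e
    rw [Setoid.ker_def, Setoid.ker_def, twistedSquare_eq_iff hρ, sq_eq_sq_iff_eq_or_eq_neg]
  have hcard : (Set.range (twistedSquare ρ)).ncard = (Set.range fun d : F => d ^ 2).ncard := by
    rw [← Nat.card_coe_set_eq, ← Nat.card_coe_set_eq,
      ← Nat.card_congr (Setoid.quotientKerEquivRange _), hker,
      Nat.card_congr (Setoid.quotientKerEquivRange _)]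
  refine Set.eq_of_subset_of_ncard_le ?_ (hsq ▸ hcard.ge) (Set.toFinite _)
  rintro _ ⟨d, rfl⟩
  exact isSquare_twistedSquare ρ d

end TwistedSquare

section BKLA

variable {K A : Type*} [CommRing K] [CommRing A] [Algebra K A] (ρ : A ≃ₐ[K] A)

/-- The multiplication `(m, x) ↦ m x^{ρ⁻¹} + m^ρ x^ρ` of the BKLA presemifield. -/
def bkla : A →ₗ[K] A →ₗ[K] A :=
  (LinearMap.mul K A).compl₂ ρ.symm.toLinearMap +
    (LinearMap.mul K A).compl₁₂ ρ.toLinearMap ρ.toLinearMap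

theorem bkla_apply (m x : A) : bkla ρ m x = m * ρ.symm x + ρ m * ρ x :=
  rfl

theorem bkla_twistedSquare (d : A) : bkla ρ (twistedSquare ρ d) = mulCongr d (bkla ρ 1) := by
  ext x
  simp only [bkla_apply, twistedSquare_apply, mulCongr_apply, map_mul, map_one,
    AlgEquiv.apply_symm_apply]
  ring

theorem isSelfAdjoint_bkla (m : A) : (Algebra.traceForm K A).IsSelfAdjoint (bkla ρ m) := by
  intro x y
  have trace_apply (z : A) : Algebra.trace K A (ρ z) = Algebra.trace K A z :=
    Algebra.trace_eq_of_algEquiv ρ z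
  have hleft := trace_apply (m * ρ.symm x * y)
  have hright := trace_apply (x * m * ρ.symm y)
  simp only [map_mul, AlgEquiv.apply_symm_apply] at hleft hright
  calc Algebra.trace K A ((m * ρ.symm x + ρ m * ρ x) * y)
      = Algebra.trace K A (m * ρ.symm x * y) + Algebra.trace K A (ρ x * ρ m * y) := by
        rw [add_mul, map_add, mul_comm (ρ m)]
    _ = Algebra.trace K A (ρ m * x * ρ y) + Algebra.trace K A (x * m * ρ.symm y) := by
        rw [hleft, hright]
    _ = Algebra.trace K A (x * (m * ρ.symm y + ρ m * ρ y)) := by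
        rw [← map_add]
        ring_nf

variable {ρ} [IsDomain A]

theorem bkla_ne_zero (hρ : ∀ x, x ≠ 0 → ρ x ≠ -x) {m x : A} (hm : m ≠ 0) (hx : x ≠ 0) :
    bkla ρ m x ≠ 0 := by
  intro h
  rw [bkla_apply] at h
  refine hρ (m * x * ρ.symm x) (by simp [hm, hx]) ?_
  simp only [map_mul, AlgEquiv.apply_symm_apply]
  linear_combination x * h

theorem bkla_apply_injective (hρ : ∀ x, x ≠ 0 → ρ x ≠ -x) {m : A} (hm : m ≠ 0) :
    Function.Injective (bkla ρ m) :=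
  (injective_iff_map_eq_zero _).mpr fun _ h => not_imp_not.mp (bkla_ne_zero hρ hm) h

theorem bkla_flip_injective (hρ : ∀ x, x ≠ 0 → ρ x ≠ -x) {x : A} (hx : x ≠ 0) :
    Function.Injective ((bkla ρ).flip x) :=
  (injective_iff_map_eq_zero _).mpr fun _ h => not_imp_not.mp (bkla_ne_zero hρ · hx) h

theorem bkla_injective (hρ : ∀ x, x ≠ 0 → ρ x ≠ -x) : Function.Injective (bkla ρ) :=
  fun _ _ h => bkla_flip_injective hρ one_ne_zero (LinearMap.congr_fun h 1)

variable {F : Type*} [Field F] [Finite F] [Algebra K F] {ρ : F ≃ₐ[K] F}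

theorem isSpreadSet_range_bkla (hρ : ∀ x, x ≠ 0 → ρ x ≠ -x) : IsSpreadSet (Set.range (bkla ρ)) := by
  intro x hx y
  obtain ⟨m, rfl⟩ := Finite.surjective_of_injective (bkla_flip_injective hρ hx) y
  refine ⟨bkla ρ m, ⟨⟨m, rfl⟩, rfl⟩, ?_⟩
  rintro _ ⟨⟨n, rfl⟩, hn⟩
  exact congrArg _ (bkla_flip_injective hρ hx hn)

/-- The linear automorphism `α(u) = u^{ρ⁻¹} + u^ρ` of a finite field. -/
noncomputable def bklaOneEquiv (hρ : ∀ x, x ≠ 0 → ρ x ≠ -x) : F ≃ₗ[K] F :=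
  LinearEquiv.ofBijective (bkla ρ 1)
    (Finite.injective_iff_bijective.mp (bkla_apply_injective hρ one_ne_zero))

theorem coe_bklaOneEquiv (hρ : ∀ x, x ≠ 0 → ρ x ≠ -x) : (bklaOneEquiv hρ).toLinearMap = bkla ρ 1 :=
  rfl

theorem bklaOneEquiv_apply (hρ : ∀ x, x ≠ 0 → ρ x ≠ -x) (u : F) :
    bklaOneEquiv hρ u = ρ.symm u + ρ u := by
  rw [← LinearEquiv.coe_coe, coe_bklaOneEquiv, bkla_apply, map_one, one_mul, one_mul]

end BKLA

section NetReplacement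

variable {K F : Type*} [CommRing K] [Field F] [Algebra K F] (ρ : F ≃ₐ[K] F)

/-- The net of the BKLA spread set indexed by the nonzero squares. -/
def squareNet : Set (F →ₗ[K] F) :=
  bkla ρ '' {m | m ≠ 0 ∧ IsSquare m}

variable {ρ}

theorem range_bkla_sdiff_squareNet (hρ : ∀ x, x ≠ 0 → ρ x ≠ -x) :
    Set.range (bkla ρ) \ squareNet ρ =
      insert 0 (bkla ρ '' {m | m ≠ 0 ∧ ¬∃ c, c ≠ 0 ∧ m = c ^ 2}) := by
  have hcompl : {m : F | m ≠ 0 ∧ IsSquare m}ᶜ =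
      insert 0 {m | m ≠ 0 ∧ ¬∃ c, c ≠ 0 ∧ m = c ^ 2} := by
    ext m
    by_cases hm : m = 0
    · simp [hm]
    have hsq : IsSquare m ↔ ∃ c, c ≠ 0 ∧ m = c ^ 2 := by
      rw [isSquare_iff_exists_sq]
      refine exists_congr fun c => ⟨fun h => ⟨?_, h⟩, And.right⟩
      rintro rfl
      exact hm (h.trans (zero_pow two_ne_zero))
    simp [hm, hsq]
  rw [squareNet, ← Set.image_compl_eq_range_sdiff_image (bkla_injective hρ), hcompl,
    Set.image_insert_eq, map_zero]

variable [Finite F]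

theorem mem_squareNet_iff (hρ : ∀ x, x ≠ 0 → ρ x ≠ -x) {A : F →ₗ[K] F} :
    A ∈ squareNet ρ ↔ ∃ d, d ≠ 0 ∧ mulCongr d (bkla ρ 1) = A := by
  constructor
  · rintro ⟨m, ⟨hm, hmsq⟩, rfl⟩
    obtain ⟨d, rfl⟩ := (range_twistedSquare hρ).ge hmsq
    exact ⟨d, (map_ne_zero _).mp hm, (bkla_twistedSquare ρ d).symm⟩
  · rintro ⟨d, hd, rfl⟩
    exact ⟨_, ⟨(map_ne_zero _).mpr hd, isSquare_twistedSquare ρ d⟩, bkla_twistedSquare ρ d⟩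

/-- The net replacing `squareNet`: the maps `x ↦ s β(x s)` for `s ∈ R`, where `β = α⁻¹`. -/
def replacementNet (hρ : ∀ x, x ≠ 0 → ρ x ≠ -x) (R : Set F) : Set (F →ₗ[K] F) :=
  (fun s => mulCongr s (bklaOneEquiv hρ).symm.toLinearMap) '' R

theorem eq_or_eq_neg_of_mulCongr_symm_apply_eq (hρ : ∀ x, x ≠ 0 → ρ x ≠ -x) {r s x : F}
    (hr : r ≠ 0) (hs : s ≠ 0) (hx : x ≠ 0)
    (h : mulCongr r (bklaOneEquiv hρ).symm.toLinearMap x =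
      mulCongr s (bklaOneEquiv hρ).symm.toLinearMap x) : r = s ∨ r = -s := by
  obtain ⟨y, hy⟩ : ∃ y, mulCongr s (bklaOneEquiv hρ).symm.toLinearMap x = y := ⟨_, rfl⟩
  have hy0 : y ≠ 0 := hy ▸ mulCongr_linearEquiv_ne_zero (bklaOneEquiv hρ).symm hs hx
  have hτ : twistedSquare ρ (y / (r * x)) = twistedSquare ρ (y / (s * x)) := by
    refine bkla_flip_injective hρ hx ?_
    rw [LinearMap.flip_apply, LinearMap.flip_apply, bkla_twistedSquare, bkla_twistedSquare,
      ← coe_bklaOneEquiv hρ, (mulCongr_symm_apply_eq_iff _ hr hx hy0).mp (h.trans hy),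
      (mulCongr_symm_apply_eq_iff _ hs hx hy0).mp hy]
  have eq_of_div_eq {t : F} (ht : y / (r * x) = y / (t * x)) : r = t := by
    simpa [div_eq_mul_inv, hx, hy0] using ht
  exact ((twistedSquare_eq_iff hρ).mp hτ).imp eq_of_div_eq fun hneg =>
    eq_of_div_eq (by rw [hneg, neg_mul, div_neg])

theorem exists_mem_squareNet_apply_eq (hρ : ∀ x, x ≠ 0 → ρ x ≠ -x) {R : Set F}
    (hR0 : 0 ∉ R) {B : F →ₗ[K] F} (hB : B ∈ replacementNet hρ R) {x : F} (hx : x ≠ 0) :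
    ∃ A ∈ squareNet ρ, A x = B x := by
  obtain ⟨s, hs, rfl⟩ := hB
  have hs0 : s ≠ 0 := ne_of_mem_of_not_mem hs hR0
  have hy0 := mulCongr_linearEquiv_ne_zero (bklaOneEquiv hρ).symm hs0 hx
  exact ⟨_, (mem_squareNet_iff hρ).mpr ⟨_, div_ne_zero hy0 (mul_ne_zero hs0 hx), rfl⟩,
    (mulCongr_symm_apply_eq_iff _ hs0 hx hy0).mp rfl⟩

theorem existsUnique_mem_replacementNet_apply_eq (hρ : ∀ x, x ≠ 0 → ρ x ≠ -x) {R : Set F}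
    (hR0 : 0 ∉ R) (hR : ∀ x, x ≠ 0 → ∃! s, s ∈ R ∧ (x = s ∨ x = -s)) {A : F →ₗ[K] F}
    (hA : A ∈ squareNet ρ) {x : F} (hx : x ≠ 0) :
    ∃! B, B ∈ replacementNet hρ R ∧ B x = A x := by
  obtain ⟨d, hd, rfl⟩ := (mem_squareNet_iff hρ).mp hA
  set y := mulCongr d (bkla ρ 1) x
  have hy0 : y ≠ 0 := mulCongr_linearEquiv_ne_zero (bklaOneEquiv hρ) hd hx
  have he0 : y / (d * x) ≠ 0 := div_ne_zero hy0 (mul_ne_zero hd hx)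
  have he : mulCongr (y / (d * x)) (bklaOneEquiv hρ).symm.toLinearMap x = y := by
    have hd' : y / (y / (d * x) * x) = d := by field_simp
    rw [mulCongr_symm_apply_eq_iff _ he0 hx hy0, hd', coe_bklaOneEquiv]
  obtain ⟨s, ⟨hs, hes⟩, -⟩ := hR _ he0
  have hsy : mulCongr s (bklaOneEquiv hρ).symm.toLinearMap x = y := by
    rcases hes with h | h <;> simpa [h] using he
  refine ⟨_, ⟨⟨s, hs, rfl⟩, hsy⟩, ?_⟩
  rintro _ ⟨⟨r, hr, rfl⟩, hry⟩
  have hr0 : r ≠ 0 := ne_of_mem_of_not_mem hr hR0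
  have hrs := eq_or_eq_neg_of_mulCongr_symm_apply_eq hρ hr0 (ne_of_mem_of_not_mem hs hR0) hx
    (hry.trans hsy.symm)
  rw [(hR r hr0).unique ⟨hr, Or.inl rfl⟩ ⟨hs, hrs⟩]

/-- The spread set of the Ball–Bamberg–Lavrauw–Penttila spread: the net indexed by the nonzero
squares is replaced in the BKLA spread set. -/
def bblpSpreadSet (hρ : ∀ x, x ≠ 0 → ρ x ≠ -x) (R : Set F) : Set (F →ₗ[K] F) :=
  Set.range (bkla ρ) \ squareNet ρ ∪ replacementNet hρ R

theorem isSpreadSet_bblpSpreadSet (hρ : ∀ x, x ≠ 0 → ρ x ≠ -x) {R : Set F} (hR0 : 0 ∉ R)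
    (hR : ∀ x, x ≠ 0 → ∃! s, s ∈ R ∧ (x = s ∨ x = -s)) : IsSpreadSet (bblpSpreadSet hρ R) :=
  (isSpreadSet_range_bkla hρ).replaceNet (Set.image_subset_range _ _)
    (fun _ hx _ hB => exists_mem_squareNet_apply_eq hρ hR0 hB hx)
    (fun _ hx _ hA => existsUnique_mem_replacementNet_apply_eq hρ hR0 hR hA hx)

theorem isSelfAdjoint_of_mem_bblpSpreadSet (hρ : ∀ x, x ≠ 0 → ρ x ≠ -x) {R : Set F} :
    ∀ A ∈ bblpSpreadSet hρ R, (Algebra.traceForm K F).IsSelfAdjoint A := by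
  have hα : (Algebra.traceForm K F).IsSelfAdjoint (bklaOneEquiv hρ) := isSelfAdjoint_bkla ρ 1
  rintro _ (⟨⟨m, rfl⟩, -⟩ | ⟨s, -, rfl⟩)
  · exact isSelfAdjoint_bkla ρ m
  · exact isSelfAdjoint_mulCongr (isSelfAdjoint_symm hα) s

end NetReplacement

/-- The Ball–Bamberg–Lavrauw–Penttila family attached to `ρ`, where `β` stands for the inverse of
`α(u) = u^{ρ⁻¹} + u^ρ` and `R` for a set of representatives of `F* / {±1}`. -/
def bblpFamily {F : Type*} [Field F] (ρ : F ≃+* F) (β : F → F) (R : Set F) : Set (Set (F × F)) :=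
  {{w | w.2 = 0}, {w | w.1 = 0}} ∪
    (fun m => {w | w.2 = m * ρ.symm w.1 + ρ m * ρ w.1}) '' {m | m ≠ 0 ∧ ¬∃ c, c ≠ 0 ∧ m = c ^ 2} ∪
    (fun s => {w | w.2 = s * β (w.1 * s)}) '' R

theorem bblpFamily_eq_graphSpread {K F : Type*} [CommRing K] [Field F] [Finite F] [Algebra K F]
    {ρ : F ≃ₐ[K] F} (hρ : ∀ x, x ≠ 0 → ρ x ≠ -x) (R : Set F) :
    bblpFamily ρ (bklaOneEquiv hρ).symm R = graphSpread (bblpSpreadSet hρ R) := by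
  rw [graphSpread, bblpSpreadSet, range_bkla_sdiff_squareNet hρ, replacementNet, Set.image_union,
    Set.image_insert_eq, Set.image_image, Set.image_image, bblpFamily, Set.pair_comm,
    Set.insert_union, Set.insert_union, Set.singleton_union]
  rfl

theorem bblp_family_is_symplectic_spread_general {K F : Type*} [Field K] [Field F] [Finite F]
    [Algebra K F] (ρ : F ≃ₐ[K] F) (hρ : ∀ x, x ≠ 0 → ρ x ≠ -x)
    (β : F → F) (hβ : ∀ u, β (ρ.symm u + ρ u) = u)
    (R : Set F) (hR0 : 0 ∉ R) (hR : ∀ x, x ≠ 0 → ∃! s, s ∈ R ∧ (x = s ∨ x = -s)) :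
    IsSymplecticSpread K (bblpFamily ρ β R) := by
  have hβ_eq : β = (bklaOneEquiv hρ).symm := by
    funext v
    obtain ⟨u, rfl⟩ := (bklaOneEquiv hρ).surjective v
    rw [LinearEquiv.symm_apply_apply, bklaOneEquiv_apply, hβ]
  rw [hβ_eq, bblpFamily_eq_graphSpread]
  exact (isSpreadSet_bblpSpreadSet hρ hR0 hR).isSymplecticSpread_graphSpread
    (isSelfAdjoint_of_mem_bblpSpreadSet hρ)

/-- **Theorem.** Let `F = 𝔽_q`, `q = q₁^t` odd with `t` odd, and let `ρ` be a nontrivial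
automorphism of `F` with `-1 ∉ (F*)^{ρ-1}` (i.e. `ρ x ≠ -x` for `x ≠ 0`).  Let
`β : F → F` be the inverse of `α(u) = u^{ρ⁻¹} + u^ρ`.  Then the following family of
`q + 1` subsets of `W = F ⊕ F` — the Ball–Bamberg–Lavrauw–Penttila spread —
is a symplectic spread for the form `⟨(u,v),(u',v')⟩ = tr (u v' - v u')`:
`X = {(x,0)}`; `Y = {(0,y)}`; `W_m = {(x, m x^{ρ⁻¹} + m^ρ x^ρ)}` for each nonzero
nonsquare `m`; and `W'_s = {(x, s β(x s))}` for `s` ranging over a set of representatives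
of `F*/{±1}`.  That is, each member is a totally isotropic `𝔽_p`-subspace of `W`, every
nonzero element of `W` lies in exactly one member, and there are `q + 1` members. -/
theorem bblp_family_is_symplectic_spread
    (p q₁ t : ℕ) [Fact p.Prime] (hp : Odd p)
    (F : Type*) [Field F] [Fintype F] [CharP F p] [Algebra (ZMod p) F]
    (hq : Fintype.card F = q₁ ^ t) (hq₁ : Odd q₁) (ht : Odd t)
    (ρ : F ≃+* F) (hρ : ρ ≠ RingEquiv.refl F)
    (hm1 : ∀ x : F, x ≠ 0 → ρ x ≠ -x)
    -- `β` is the two-sided inverse of `α(u) = u^{ρ⁻¹} + u^ρ`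
    (β : F → F)
    (hβ₁ : ∀ u : F, β (ρ.symm u + ρ u) = u)
    (hβ₂ : ∀ v : F, ρ.symm (β v) + ρ (β v) = v)
    -- a set of representatives of `F* / {±1}`
    (Reps : Set F) (hReps0 : (0 : F) ∉ Reps)
    (hReps : ∀ x : F, x ≠ 0 → ∃! s, s ∈ Reps ∧ (x = s ∨ x = -s))
    -- the members of the family
    (X Y : Set (F × F))
    (hX : X = {w : F × F | w.2 = 0}) (hY : Y = {w : F × F | w.1 = 0})
    (Wm : F → Set (F × F))
    (hWm : ∀ m, Wm m = {w : F × F | w.2 = m * ρ.symm w.1 + ρ m * ρ w.1})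
    (Ws : F → Set (F × F))
    (hWs : ∀ s, Ws s = {w : F × F | w.2 = s * β (w.1 * s)})
    (𝒮 : Set (Set (F × F)))
    (h𝒮 : 𝒮 = {X, Y} ∪ (Wm '' {m : F | m ≠ 0 ∧ ¬∃ c : F, c ≠ 0 ∧ m = c ^ 2}) ∪ (Ws '' Reps)) :
    -- every member is a totally isotropic `𝔽_p`-subspace
    (∀ M ∈ 𝒮,
      (∃ S : Submodule (ZMod p) (F × F), (S : Set (F × F)) = M) ∧
      (∀ u ∈ M, ∀ w ∈ M,
        Algebra.trace (ZMod p) F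
          ((Prod.fst u) * (Prod.snd w) - (Prod.snd u) * (Prod.fst w)) = 0)) ∧
    -- every nonzero point of `W` lies in a unique member
    (∀ w : F × F, w ≠ 0 → ∃! M, M ∈ 𝒮 ∧ w ∈ M) ∧
    -- the family consists of `q + 1` subspaces
    𝒮.ncard = Fintype.card F + 1 := by
  obtain ⟨rfl, rfl⟩ : Wm = _ ∧ Ws = _ := ⟨funext hWm, funext hWs⟩
  let ρ' : F ≃ₐ[ZMod p] F := .ofRingEquiv (f := ρ) (RingHom.congr_fun (RingHom.ext_zmod
    ((ρ : F →+* F).comp (algebraMap (ZMod p) F)) (algebraMap (ZMod p) F)))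
  have h := bblp_family_is_symplectic_spread_general ρ' hm1 β hβ₁ Reps hReps0 hReps
  subst hX hY h𝒮
  rw [Fintype.card_eq_nat_card]
  exact ⟨fun M hM => ⟨h.exists_submodule M hM, h.isotropic M hM⟩, h.existsUnique_mem, h.ncard_eq⟩
end

section
/- Let F = 𝔽_q be a finite field of even order q = 2^r and let (F, +, ∘) be a symplectic presemifield whose multiplication is written as x ∘ y = Σ_{0≤i,j≤r−1} a_{ij} x^{2^i} y^{2^j} with a_{ij} ∈ F. Then a_{ij} = a_{r−i, j−i}^{2^i} for all i, j, where the indices r−i and j−i are read modulo r. -/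
open scoped BigOperators

/-!
For a group `G` of automorphisms of a finite separable extension `L / K`, the trace is
`G`-invariant, so the adjoint of `x ↦ ∑ g, c g * g x` with respect to the trace form is
`x ↦ ∑ g, g (c g⁻¹) * g x`. By Dedekind's independence of automorphisms such a map determines its
coefficients, so it is self-adjoint exactly when `c g = g (c g⁻¹)` for all `g`. For
`x ∘ y = ∑ g, ∑ h, a g h * g x * h y` the coefficients `c g = ∑ h, a g h * h y` are again of this
form, and a second use of independence turns self-adjointness of `x ↦ x ∘ y` for all `y` into
`a g h = g (a g⁻¹ (g⁻¹ * h))`. The Frobenius powers of a finite field give the coefficient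
relation, since in characteristic two total isotropy of the graphs of `x ↦ x ∘ y` says that these
maps are self-adjoint.
-/

section AutSum

variable {K L G : Type*} [CommRing K] [CommRing L] [Algebra K L] [Group G] [Fintype G]

/-- The map `x ↦ ∑ g, c g * g x` on `L` given by the element `∑ g, c g * g` of the skew group ring
of a group `G` acting on `L` through `φ`. When `G` consists of Frobenius powers, these are the
linearized polynomials. -/
def autSum (φ : G →* L ≃ₐ[K] L) (c : G → L) (x : L) : L :=
  ∑ g, c g * φ g x

/-- The coefficients of the adjoint of `autSum φ c` with respect to the trace form. -/
def adjointCoeff (φ : G →* L ≃ₐ[K] L) (c : G → L) (g : G) : L :=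
  φ g (c g⁻¹)

theorem autSum_injective [IsDomain L] {φ : G →* L ≃ₐ[K] L} (hφ : Function.Injective φ) :
    Function.Injective (autSum φ) := by
  let toMonoidHom (g : G) : L →* L := (φ g : L →* L)
  have toMonoidHom_injective : Function.Injective toMonoidHom := fun _ _ h =>
    hφ (AlgEquiv.ext fun x => DFunLike.congr_fun h x)
  have independent : LinearIndependent L fun g x => φ g x :=
    (linearIndependent_monoidHom L L).comp toMonoidHom toMonoidHom_injective
  convert linearIndependent_iff_injective_fintypeLinearCombination.mp independent using 1
  ext c x
  simp only [autSum, Fintype.linearCombination_apply, Finset.sum_apply, Pi.smul_apply, smul_eq_mul]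

variable (φ : G →* L ≃ₐ[K] L)

theorem map_autSum (g : G) (c : G → L) (x : L) :
    φ g (autSum φ c x) = autSum φ (fun h => φ g (c (g⁻¹ * h))) x := by
  simp only [autSum, map_sum, map_mul]
  refine Fintype.sum_equiv (Equiv.mulLeft g) _ _ fun h => ?_
  rw [Equiv.coe_mulLeft, inv_mul_cancel_left, map_mul, AlgEquiv.mul_apply]

theorem trace_mul_autSum (c : G → L) (x z : L) :
    Algebra.trace K L (x * autSum φ c z) =
      Algebra.trace K L (z * autSum φ (adjointCoeff φ c) x) := by
  simp only [autSum, Finset.mul_sum, map_sum]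
  refine Fintype.sum_equiv (Equiv.inv G) _ _ fun g => ?_
  calc
    Algebra.trace K L (x * (c g * φ g z)) =
        Algebra.trace K L (φ g⁻¹ (x * (c g * φ g z))) :=
      (Algebra.trace_eq_of_algEquiv _ _).symm
    _ = Algebra.trace K L (z * (adjointCoeff φ c g⁻¹ * φ g⁻¹ x)) := by
      have inv_apply : φ g⁻¹ (φ g z) = z := by 
        rw [← AlgEquiv.mul_apply, ← map_mul, inv_mul_cancel, map_one, AlgEquiv.one_apply]
      rw [adjointCoeff, inv_inv, map_mul (φ g⁻¹), map_mul (φ g⁻¹), inv_apply]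
      ring_nf

end AutSum

section SelfAdjoint

variable {K L : Type*} [Field K] [Field L] [Algebra K L] [FiniteDimensional K L]
  [Algebra.IsSeparable K L]

theorem forall_trace_mul_eq_iff {v w : L} :
    (∀ x, Algebra.trace K L (x * v) = Algebra.trace K L (x * w)) ↔ v = w := by
  refine ⟨fun h => sub_eq_zero.mp ((traceForm_nondegenerate K L).2 _ fun x => ?_),
    fun h _ => by rw [h]⟩
  rw [Algebra.traceForm_apply, mul_sub, map_sub, h, sub_self]

variable {G : Type*} [Group G] [Fintype G] {φ : G →* L ≃ₐ[K] L}

theorem autSum_selfAdjoint_iff (hφ : Function.Injective φ) (c : G → L) :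
    (∀ x z, Algebra.trace K L (x * autSum φ c z) = Algebra.trace K L (z * autSum φ c x)) ↔
      c = adjointCoeff φ c := by
  conv_lhs => enter [x, z]; rw [trace_mul_autSum]
  simp only [forall_trace_mul_eq_iff]
  rw [← funext_iff, (autSum_injective hφ).eq_iff, eq_comm]

theorem autSum_autSum_selfAdjoint_iff (hφ : Function.Injective φ) (a : G → G → L) :
    (∀ y x z, Algebra.trace K L (x * autSum φ (fun g => autSum φ (a g) y) z) =
        Algebra.trace K L (z * autSum φ (fun g => autSum φ (a g) y) x)) ↔
      ∀ g h, a g h = φ g (a g⁻¹ (g⁻¹ * h)) := by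
  simp only [autSum_selfAdjoint_iff hφ, funext_iff, adjointCoeff, map_autSum]
  rw [forall_comm]
  simp only [← funext_iff, (autSum_injective hφ).eq_iff]

end SelfAdjoint

section FinPowHom

variable {M : Type*} [Monoid M] {r : ℕ} [NeZero r] {g : M}

/-- The homomorphism `i ↦ g ^ i` from the cyclic group `Fin r`, with addition modulo `r`, for an
element `g` whose order divides `r`. It serves to index the powers of `g` by exponents. -/
def finPowHom (hg : g ^ r = 1) : Multiplicative (Fin r) →* M where
  toFun i := g ^ (i.toAdd : ℕ)
  map_one' := by rw [toAdd_one, Fin.val_zero, pow_zero]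
  map_mul' i j := by rw [toAdd_mul, Fin.val_add, ← pow_add, ← pow_eq_pow_mod _ hg]

theorem finPowHom_injective (hg : orderOf g = r) :
    Function.Injective (finPowHom (hg ▸ pow_orderOf_eq_one g)) := fun i j h =>
  Multiplicative.toAdd.injective <| Fin.ext <|
    pow_injOn_Iio_orderOf (hg ▸ i.toAdd.isLt) (hg ▸ j.toAdd.isLt) h

end FinPowHom

theorem finrank_eq_of_card_eq_pow {K F : Type*} [Field K] [Fintype K] [Field F] [Fintype F]
    [Algebra K F] {r : ℕ} (h : Fintype.card F = Fintype.card K ^ r) : Module.finrank K F = r :=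
  Nat.pow_right_injective Fintype.one_lt_card (Module.card_eq_pow_finrank.symm.trans h)

theorem coeff_relation_symplectic_presemifield_even_general
    {K F : Type*} [Field K] [Fintype K] [Field F] [Fintype F] [Algebra K F] {q r : ℕ}
    (hq : Fintype.card K = q) (hcard : Fintype.card F = q ^ r) (a : Fin r → Fin r → F)
    (circ : F → F → F)
    (hcirc : ∀ x y, circ x y = ∑ i, ∑ j, a i j * x ^ q ^ (i : ℕ) * y ^ q ^ (j : ℕ)) :
    (∀ y x z, Algebra.trace K F (x * circ z y) = Algebra.trace K F (z * circ x y)) ↔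
      ∀ i j, a i j = a (-i) (j - i) ^ q ^ (i : ℕ) := by
  subst hq
  have hr : Module.finrank K F = r := finrank_eq_of_card_eq_pow hcard
  have : NeZero r := ⟨hr ▸ Module.finrank_pos.ne'⟩
  let σ := FiniteField.frobeniusAlgEquivOfAlgebraic K F
  have hσ : orderOf σ = r := (FiniteField.orderOf_frobeniusAlgEquivOfAlgebraic K F).trans hr
  let φ := finPowHom (hσ ▸ pow_orderOf_eq_one σ)
  have hφ : Function.Injective φ := finPowHom_injective hσ
  have φ_apply (i : Multiplicative (Fin r)) (x : F) :
      φ i x = x ^ Fintype.card K ^ (i.toAdd : ℕ) := by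
    change (σ ^ (i.toAdd : ℕ)) x = _
    rw [AlgEquiv.coe_pow, FiniteField.coe_frobeniusAlgEquivOfAlgebraic_iterate]
  let b (g h : Multiplicative (Fin r)) : F := a g.toAdd h.toAdd
  have circ_eq (x y : F) : circ x y = autSum φ (fun g => autSum φ (b g) y) x := by
    simp only [hcirc, autSum, Finset.sum_mul]
    refine Fintype.sum_equiv Multiplicative.ofAdd _ _ fun i =>
      Fintype.sum_equiv Multiplicative.ofAdd _ _ fun j => ?_
    rw [φ_apply, φ_apply, mul_right_comm]
    rfl
  simp only [circ_eq, autSum_autSum_selfAdjoint_iff hφ, φ_apply, b, Multiplicative.forall,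
    toAdd_ofAdd, toAdd_inv, toAdd_mul, neg_add_eq_sub]

/-- **Lemma.** Let `F = 𝔽_q` be a finite field of even order `q = 2^r` and `(F, +, ∘)` a
symplectic presemifield whose multiplication is written as
`x ∘ y = ∑_{0 ≤ i,j ≤ r-1} a i j x^{2^i} y^{2^j}`.  Then `a i j = (a (r-i) (j-i))^{2^i}`
for all `i j`, the indices `r - i` and `j - i` being read modulo `r` (here computed by the
subtraction and negation of `Fin r`). -/
theorem coeff_relation_symplectic_presemifield_even
    (r : ℕ) (hr : 0 < r)
    (F : Type*) [Field F] [Fintype F] [CharP F 2] [Algebra (ZMod 2) F]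
    (hcard : Fintype.card F = 2 ^ r)
    (a : Fin r → Fin r → F)
    (circ : F → F → F)
    (hcirc : ∀ x y : F, circ x y =
      ∑ i : Fin r, ∑ j : Fin r, a i j * x ^ 2 ^ (i : ℕ) * y ^ 2 ^ (j : ℕ))
    (hdistl : ∀ x y z : F, circ (x + y) z = circ x z + circ y z)
    (hdistr : ∀ x y z : F, circ x (y + z) = circ x y + circ x z)
    (hnzd : ∀ x y : F, circ x y = 0 → x = 0 ∨ y = 0)
    (hsympl : ∀ y x z : F,
      Algebra.trace (ZMod 2) F (x * circ z y + z * circ x y) = 0) :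
    ∀ i j : Fin r, a i j = (a (-i) (j - i)) ^ 2 ^ (i : ℕ) := by
  exact (coeff_relation_symplectic_presemifield_even_general (ZMod.card 2) hcard a circ hcirc).mp
    fun y x z => CharTwo.add_eq_zero.mp ((map_add _ _ _).symm.trans (hsympl y x z))
end

section
/- Let F be a finite field of characteristic two and suppose (F, +, *) is a commutative presemifield with multiplication given by x * y = xy + Σ_{0≤i<j≤r−1} a_{ij}(x^{2^i} y^{2^j} + x^{2^j} y^{2^i}). Then f(x) = Σ_{i<j} a_{ij} x^{2^i + 2^j} is a pseudo-planar function, and x * y = xy + f(x+y) + f(x) + f(y) for all x, y ∈ F. -/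
open scoped BigOperators

/-!
For `f x = ∑ aᵢⱼ x ^ (2 ^ i + 2 ^ j)` the polarization `f (x + y) + f x + f y` is biadditive and is
the difference between the presemifield product `x ∗ y` and the field product `x y`. Hence
`x ↦ f (x + c) + f x + c x` is the additive map `x ↦ c ∗ x` followed by the translation by `f c`,
and on a finite ring an additive map with trivial kernel is bijective.
-/

open QuadraticMap (polar polar_comm)

section PseudoPlanar

variable {R : Type*}

/-- Pseudo-planar functions, the characteristic two analogue of planar functions. -/
def IsPseudoPlanar [Semiring R] (f : R → R) : Prop :=
  ∀ c : R, c ≠ 0 → Function.Bijective fun x => f (x + c) + f x + c * x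

variable [Ring R] [CharP R 2]

theorem polar_eq_add_of_charTwo (f : R → R) (x y : R) :
    polar f x y = f (x + y) + f x + f y := by
  simp only [polar, CharTwo.sub_eq_add]

theorem add_add_mul_eq_mul_add_polar_add (f : R → R) (c x : R) :
    f (x + c) + f x + c * x = c * x + polar f c x + f c := by
  rw [polar_comm, polar_eq_add_of_charTwo, ← add_assoc, CharTwo.add_cancel_right, add_comm]

theorem isPseudoPlanar_iff_of_polar_add [Finite R] {f : R → R}
    (hf : ∀ x y z, polar f x (y + z) = polar f x y + polar f x z) :
    IsPseudoPlanar f ↔ ∀ x y, x * y + polar f x y = 0 → x = 0 ∨ y = 0 := by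
  let L (c : R) : R →+ R :=
    AddMonoidHom.mk' (fun x => c * x + polar f c x) fun x y => by
      rw [hf, mul_add, add_add_add_comm]
  have bijective_iff (c : R) :
      (Function.Bijective fun x => f (x + c) + f x + c * x) ↔ ∀ x, L c x = 0 → x = 0 := by
    simp only [add_add_mul_eq_mul_add_polar_add]
    rw [← injective_iff_map_eq_zero, Finite.injective_iff_bijective]
    exact (Equiv.addRight (f c)).comp_bijective (L c)
  simp only [IsPseudoPlanar, bijective_iff]
  exact forall_congr' fun c =>
    ⟨fun h x hx => or_iff_not_imp_left.mpr fun hc => h hc x hx,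
      fun h hc x hx => (h x hx).resolve_left hc⟩

end PseudoPlanar

section DembowskiOstrom

variable {R : Type*} {r : ℕ}

/-- The function of a Dembowski–Ostrom polynomial, with exponents `p ^ i + p ^ j` for `i, j < r`.
All ordered pairs `(i, j)` are summed over, so a triangular coefficient matrix `a` gives the
usual normal form. -/
def dembowskiOstrom [Semiring R] (p : ℕ) (a : Fin r → Fin r → R) (x : R) : R :=
  ∑ i, ∑ j, a i j * x ^ (p ^ (i : ℕ) + p ^ (j : ℕ))

variable [CommRing R] (p : ℕ) [ExpChar R p]

theorem polar_pow_add_pow (i j : ℕ) (x y : R) :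
    polar (fun z : R => z ^ (p ^ i + p ^ j)) x y =
      x ^ p ^ i * y ^ p ^ j + x ^ p ^ j * y ^ p ^ i := by
  simp only [polar, pow_add, add_pow_expChar_pow]
  ring

theorem polar_dembowskiOstrom (a : Fin r → Fin r → R) (x y : R) :
    polar (dembowskiOstrom p a) x y =
      ∑ i : Fin r, ∑ j : Fin r, a i j *
        (x ^ p ^ (i : ℕ) * y ^ p ^ (j : ℕ) + x ^ p ^ (j : ℕ) * y ^ p ^ (i : ℕ)) := by
  simp only [← polar_pow_add_pow, polar, dembowskiOstrom, mul_sub, Finset.sum_sub_distrib]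

theorem polar_dembowskiOstrom_add_right (a : Fin r → Fin r → R) (x y z : R) :
    polar (dembowskiOstrom p a) x (y + z) =
      polar (dembowskiOstrom p a) x y + polar (dembowskiOstrom p a) x z := by
  simp only [polar_dembowskiOstrom, add_pow_expChar_pow, ← Finset.sum_add_distrib]
  refine Finset.sum_congr rfl fun i _ => Finset.sum_congr rfl fun j _ => ?_
  ring

end DembowskiOstrom

theorem pseudoPlanar_of_commutative_presemifield_even_general
    {r : ℕ} {R : Type*} [CommRing R] [Finite R] [CharP R 2]
    (a : Fin r → Fin r → R) (mul : R → R → R)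
    (hmul : ∀ x y : R, mul x y = x * y + ∑ i : Fin r, ∑ j : Fin r, a i j *
      (x ^ 2 ^ (i : ℕ) * y ^ 2 ^ (j : ℕ) + x ^ 2 ^ (j : ℕ) * y ^ 2 ^ (i : ℕ)))
    (hnzd : ∀ x y : R, mul x y = 0 → x = 0 ∨ y = 0) :
    IsPseudoPlanar (dembowskiOstrom 2 a) ∧
      ∀ x y : R, mul x y =
        x * y + dembowskiOstrom 2 a (x + y) + dembowskiOstrom 2 a x + dembowskiOstrom 2 a y := by
  have mul_eq (x y : R) : mul x y = x * y + polar (dembowskiOstrom 2 a) x y := by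
    rw [hmul, polar_dembowskiOstrom]
  constructor
  · rw [isPseudoPlanar_iff_of_polar_add (polar_dembowskiOstrom_add_right 2 a)]
    simpa only [mul_eq] using hnzd
  · intro x y
    rw [mul_eq, polar_eq_add_of_charTwo, ← add_assoc, ← add_assoc]

/-- **Theorem (part 1).** Let `F` be a finite field of characteristic two, `|F| = 2^r`, and
suppose `(F, +, *)` is a commutative presemifield with multiplication
`x * y = x y + ∑_{0 ≤ i < j ≤ r-1} a i j (x^{2^i} y^{2^j} + x^{2^j} y^{2^i})`.
Then `f x = ∑_{i<j} a i j x^{2^i + 2^j}` is a pseudo-planar function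
(`x ↦ f (x + c) + f x + c x` is a permutation of `F` for every `c ≠ 0`), and
`x * y = x y + f (x + y) + f x + f y` for all `x y`. -/
theorem pseudoPlanar_of_commutative_presemifield_even
    (r : ℕ)
    (F : Type*) [Field F] [Fintype F] [CharP F 2]
    (hcard : Fintype.card F = 2 ^ r)
    (a : Fin r → Fin r → F)
    (mul : F → F → F)
    (hmul : ∀ x y : F, mul x y = x * y +
      ∑ i : Fin r, ∑ j : Fin r, if i < j then
        a i j * (x ^ 2 ^ (i : ℕ) * y ^ 2 ^ (j : ℕ) + x ^ 2 ^ (j : ℕ) * y ^ 2 ^ (i : ℕ))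
      else 0)
    (hcomm : ∀ x y : F, mul x y = mul y x)
    (hdistl : ∀ x y z : F, mul (x + y) z = mul x z + mul y z)
    (hdistr : ∀ x y z : F, mul x (y + z) = mul x y + mul x z)
    (hnzd : ∀ x y : F, mul x y = 0 → x = 0 ∨ y = 0)
    (f : F → F)
    (hf : ∀ x : F, f x =
      ∑ i : Fin r, ∑ j : Fin r, if i < j then a i j * x ^ (2 ^ (i : ℕ) + 2 ^ (j : ℕ)) else 0) :
    (∀ c : F, c ≠ 0 → Function.Bijective fun x => f (x + c) + f x + c * x) ∧
    (∀ x y : F, mul x y = x * y + f (x + y) + f x + f y) := by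
  obtain rfl : f = dembowskiOstrom 2 fun i j => if i < j then a i j else 0 := by
    ext x
    simp only [hf, dembowskiOstrom, ite_mul, zero_mul]
  exact pseudoPlanar_of_commutative_presemifield_even_general _ mul
    (by simpa only [ite_mul, zero_mul] using hmul) hnzd
end

section
/- Let F be a finite field of characteristic two and let (F, +, *) be a commutative presemifield with multiplication x * y = Σ_i a_i x^{2^i} y^{2^i} + Σ_{i<j} a_{ij}(x^{2^i} y^{2^j} + x^{2^j} y^{2^i}). Then the 𝔽_2-linear map g(x) = Σ_i a_i x^{2^i} (which satisfies x * x = g(x²)) is a bijection of F. -/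
open scoped BigOperators

/-!
In characteristic two the terms with `i < j` cancel on the diagonal, so `x * x = g (x ^ 2)`. Since
every element is a square, the kernel of the additive map `g` consists of the squares of the `x`
with `x * x = 0`. Without zero divisors it is trivial, and an injective self-map of a finite set
is bijective.
-/

section LinearizedMap

variable {R : Type*} [CommSemiring R] {r : ℕ}

/-- The evaluation map of the linearized polynomial `∑ i, b i * X ^ p ^ i` in characteristic `p`,
bundled as an additive map; `ExpChar` also admits the case `p = 1` of characteristic zero. -/
def linearizedMap (p : ℕ) [ExpChar R p] (b : Fin r → R) : R →+ R where
  toFun x := ∑ i : Fin r, b i * x ^ p ^ (i : ℕ)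
  map_zero' := by simp [expChar_ne_zero R p]
  map_add' x y := by simp only [add_pow_expChar_pow, mul_add, Finset.sum_add_distrib]

/-- The product on `R` with diagonal coefficients `b i` and off-diagonal coefficients `a i j`, of
which only those with `i < j` occur. Over a field with `2 ^ r` elements, every commutative
biadditive product has this form. -/
def symmetricProduct (b : Fin r → R) (a : Fin r → Fin r → R) (x y : R) : R :=
  (∑ i : Fin r, b i * x ^ 2 ^ (i : ℕ) * y ^ 2 ^ (i : ℕ)) +
    ∑ i : Fin r, ∑ j : Fin r, if i < j then
      a i j * (x ^ 2 ^ (i : ℕ) * y ^ 2 ^ (j : ℕ) + x ^ 2 ^ (j : ℕ) * y ^ 2 ^ (i : ℕ))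
    else 0

theorem symmetricProduct_self [CharP R 2] (b : Fin r → R) (a : Fin r → Fin r → R) (x : R) :
    symmetricProduct b a x x = linearizedMap 2 b (x ^ 2) := by
  have off_diagonal (i j : Fin r) :
      x ^ 2 ^ (i : ℕ) * x ^ 2 ^ (j : ℕ) + x ^ 2 ^ (j : ℕ) * x ^ 2 ^ (i : ℕ) = 0 := by
    rw [mul_comm (x ^ 2 ^ (j : ℕ)), CharTwo.add_self_eq_zero]
  have diagonal (i : Fin r) :
      b i * x ^ 2 ^ (i : ℕ) * x ^ 2 ^ (i : ℕ) = b i * (x ^ 2) ^ 2 ^ (i : ℕ) := by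
    ring
  simp only [symmetricProduct, off_diagonal, diagonal, mul_zero, ite_self,
    Finset.sum_const_zero, add_zero]
  rfl

end LinearizedMap

section Anisotropic

variable {R : Type*} [CommRing R] [CharP R 2] {r : ℕ}

theorem linearizedMap_injective_iff_symmetricProduct_anisotropic [PerfectRing R 2]
    (b : Fin r → R) (a : Fin r → Fin r → R) :
    Function.Injective (linearizedMap 2 b) ↔ ∀ x, symmetricProduct b a x x = 0 → x = 0 := by
  calc
    Function.Injective (linearizedMap 2 b)
      ↔ ∀ y, linearizedMap 2 b y = 0 → y = 0 := injective_iff_map_eq_zero _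
    _ ↔ ∀ x, linearizedMap 2 b (x ^ 2) = 0 → x ^ 2 = 0 := (surjective_frobenius R 2).forall
    _ ↔ ∀ x, symmetricProduct b a x x = 0 → x = 0 := by
      have sq_eq_zero (x : R) : x ^ 2 = 0 ↔ x = 0 :=
        map_eq_zero_iff (frobenius R 2) (injective_frobenius R 2)
      simp only [symmetricProduct_self, sq_eq_zero]

theorem diagonal_linear_map_bijective_of_commutative_presemifield_even_general
    [Finite R] [IsReduced R] (b : Fin r → R) (a : Fin r → Fin r → R) :
    (∀ x, symmetricProduct b a x x = linearizedMap 2 b (x ^ 2)) ∧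
      (Function.Bijective (linearizedMap 2 b) ↔ ∀ x, symmetricProduct b a x x = 0 → x = 0) :=
  ⟨symmetricProduct_self b a, Finite.injective_iff_bijective.symm.trans
    (linearizedMap_injective_iff_symmetricProduct_anisotropic b a)⟩

end Anisotropic

/-- **Theorem (part 2, key step).** Let `F` be a finite field of characteristic two,
`|F| = 2^r`, and let `(F, +, *)` be a commutative presemifield with multiplication
`x * y = ∑_i b i x^{2^i} y^{2^i} + ∑_{i<j} a i j (x^{2^i} y^{2^j} + x^{2^j} y^{2^i})`.
Then the `𝔽_2`-linear map `g x = ∑_i b i x^{2^i}`, which satisfies `x * x = g (x²)`,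
is a bijection of `F`. -/
theorem diagonal_linear_map_bijective_of_commutative_presemifield_even
    (r : ℕ)
    (F : Type*) [Field F] [Fintype F] [CharP F 2]
    (hcard : Fintype.card F = 2 ^ r)
    (b : Fin r → F) (a : Fin r → Fin r → F)
    (mul : F → F → F)
    (hmul : ∀ x y : F, mul x y =
      (∑ i : Fin r, b i * x ^ 2 ^ (i : ℕ) * y ^ 2 ^ (i : ℕ)) +
      ∑ i : Fin r, ∑ j : Fin r, if i < j then
        a i j * (x ^ 2 ^ (i : ℕ) * y ^ 2 ^ (j : ℕ) + x ^ 2 ^ (j : ℕ) * y ^ 2 ^ (i : ℕ))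
      else 0)
    (hcomm : ∀ x y : F, mul x y = mul y x)
    (hdistl : ∀ x y z : F, mul (x + y) z = mul x z + mul y z)
    (hdistr : ∀ x y z : F, mul x (y + z) = mul x y + mul x z)
    (hnzd : ∀ x y : F, mul x y = 0 → x = 0 ∨ y = 0)
    (g : F → F)
    (hg : ∀ x : F, g x = ∑ i : Fin r, b i * x ^ 2 ^ (i : ℕ)) :
    (∀ x : F, mul x x = g (x ^ 2)) ∧ Function.Bijective g := by
  obtain ⟨rfl, rfl⟩ : mul = symmetricProduct b a ∧ g = linearizedMap 2 b :=
    ⟨funext₂ hmul, funext hg⟩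
  exact (diagonal_linear_map_bijective_of_commutative_presemifield_even_general b a).imp_right
    fun bijective_iff => bijective_iff.mpr fun x hx => or_self_iff.mp (hnzd x x hx)
end

section
/- Let F be a finite field of odd order and let f : F → F be a quadratic pseudo-planar function with f(0) = 0, where quadratic means f(x+y+z) − f(x+y) − f(x+z) − f(y+z) + f(x) + f(y) + f(z) = 0 for all x, y, z ∈ F. Then the product x * y = xy + f(x+y) − f(x) − f(y) makes (F, +, *) a commutative presemifield. -/
/-!
Up to the constant `f a`, the map `x ↦ f (x + a) - f x + a * x` is right multiplication by `a`
for the new product, which is thus cancellative when `f` is pseudo-planar. The product differs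
from `x * y` by the polarization of `f`, and `f` is quadratic exactly when its polarization is
biadditive.
-/

open QuadraticMap (polar polar_comm polar_add_left_iff)

/-- A function between additive groups is quadratic if its polarization is biadditive, expressed
through third-order differences. Unlike for `QuadraticMap`, no compatibility with scalars is
required. -/
def IsQuadraticFunction {A B : Type*} [AddCommGroup A] [AddCommGroup B] (f : A → B) : Prop :=
  ∀ x y z : A, f (x + y + z) - f (x + y) - f (x + z) - f (y + z) + f x + f y + f z = 0

namespace IsQuadraticFunction

variable {A B : Type*} [AddCommGroup A] [AddCommGroup B] {f : A → B}

theorem map_zero (hf : IsQuadraticFunction f) : f 0 = 0 := by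
  simpa using hf 0 0 0

theorem polar_add_left (hf : IsQuadraticFunction f) (x y z : A) :
    polar f (x + y) z = polar f x z + polar f y z := by
  rw [polar_add_left_iff, ← sub_eq_zero, ← hf x y z, add_comm z x]
  abel

end IsQuadraticFunction

/-- The product that a function `f` on a ring associates with the ring multiplication; a quadratic
pseudo-planar `f` on a finite field yields a commutative presemifield. -/
def pseudoPlanarMul {R : Type*} [NonUnitalNonAssocRing R] (f : R → R) (x y : R) : R :=
  x * y + f (x + y) - f x - f y

section NonUnitalNonAssocRing

variable {R : Type*} [NonUnitalNonAssocRing R] {f : R → R}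

theorem pseudoPlanarMul_eq_mul_add_polar (f : R → R) (x y : R) :
    pseudoPlanarMul f x y = x * y + polar f x y := by
  rw [pseudoPlanarMul, polar]
  abel

theorem IsQuadraticFunction.pseudoPlanarMul_add_left (hf : IsQuadraticFunction f) (x y z : R) :
    pseudoPlanarMul f (x + y) z = pseudoPlanarMul f x z + pseudoPlanarMul f y z := by
  simp only [pseudoPlanarMul_eq_mul_add_polar, hf.polar_add_left, add_mul]
  abel

theorem zero_pseudoPlanarMul (hf : f 0 = 0) (y : R) : pseudoPlanarMul f 0 y = 0 := by
  simp [pseudoPlanarMul, hf]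

end NonUnitalNonAssocRing

section NonUnitalNonAssocCommRing

variable {R : Type*} [NonUnitalNonAssocCommRing R] {f : R → R}

theorem pseudoPlanarMul_comm (f : R → R) (x y : R) :
    pseudoPlanarMul f x y = pseudoPlanarMul f y x := by
  simp only [pseudoPlanarMul_eq_mul_add_polar, mul_comm x y, polar_comm f x y]

theorem IsQuadraticFunction.pseudoPlanarMul_add_right (hf : IsQuadraticFunction f) (x y z : R) :
    pseudoPlanarMul f x (y + z) = pseudoPlanarMul f x y + pseudoPlanarMul f x z := by
  simp only [pseudoPlanarMul_comm f x, hf.pseudoPlanarMul_add_left]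

theorem sub_add_mul_eq_pseudoPlanarMul_add (f : R → R) (a x : R) :
    f (x + a) - f x + a * x = pseudoPlanarMul f x a + f a := by
  rw [pseudoPlanarMul, mul_comm a x]
  abel

theorem pseudoPlanarMul_left_injective {a : R}
    (ha : Function.Injective fun x => f (x + a) - f x + a * x) :
    Function.Injective fun x => pseudoPlanarMul f x a := by
  simp only [sub_add_mul_eq_pseudoPlanarMul_add] at ha
  exact Function.Injective.of_comp (f := (· + f a)) ha

theorem IsQuadraticFunction.eq_zero_or_eq_zero_of_pseudoPlanarMul_eq_zero
    (hf : IsQuadraticFunction f)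
    (hinj : ∀ a : R, a ≠ 0 → Function.Injective fun x => f (x + a) - f x + a * x)
    {x y : R} (hxy : pseudoPlanarMul f x y = 0) : x = 0 ∨ y = 0 := by
  refine or_iff_not_imp_right.mpr fun hy => pseudoPlanarMul_left_injective (hinj y hy) ?_
  exact hxy.trans (zero_pseudoPlanarMul hf.map_zero y).symm

theorem commutative_presemifield_of_quadratic_pseudoPlanar_odd_general
    (hf : IsQuadraticFunction f)
    (hinj : ∀ a : R, a ≠ 0 → Function.Injective fun x => f (x + a) - f x + a * x) :
    (∀ x y : R, pseudoPlanarMul f x y = pseudoPlanarMul f y x) ∧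
    (∀ x y z : R, pseudoPlanarMul f (x + y) z = pseudoPlanarMul f x z + pseudoPlanarMul f y z) ∧
    (∀ x y z : R, pseudoPlanarMul f x (y + z) = pseudoPlanarMul f x y + pseudoPlanarMul f x z) ∧
    (∀ x y : R, pseudoPlanarMul f x y = 0 → x = 0 ∨ y = 0) :=
  ⟨pseudoPlanarMul_comm f, hf.pseudoPlanarMul_add_left, hf.pseudoPlanarMul_add_right,
    fun _ _ => hf.eq_zero_or_eq_zero_of_pseudoPlanarMul_eq_zero hinj⟩

end NonUnitalNonAssocCommRing

/-- **Remark.** Let `F` be a finite field of odd order and `f : F → F` a quadratic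
pseudo-planar function with `f 0 = 0` (quadratic meaning
`f (x+y+z) - f (x+y) - f (x+z) - f (y+z) + f x + f y + f z = 0`).  Then the product
`x * y = x y + f (x + y) - f x - f y` makes `(F, +, *)` a commutative presemifield. -/
theorem commutative_presemifield_of_quadratic_pseudoPlanar_odd
    (F : Type*) [Field F] [Fintype F] (hodd : Odd (Fintype.card F))
    (f : F → F) (hf0 : f 0 = 0)
    (hquad : ∀ x y z : F,
      f (x + y + z) - f (x + y) - f (x + z) - f (y + z) + f x + f y + f z = 0)
    (hpp : ∀ a : F, a ≠ 0 → Function.Bijective fun x => f (x + a) - f x + a * x)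
    (mul : F → F → F)
    (hmul : ∀ x y : F, mul x y = x * y + f (x + y) - f x - f y) :
    (∀ x y : F, mul x y = mul y x) ∧
    (∀ x y z : F, mul (x + y) z = mul x z + mul y z) ∧
    (∀ x y z : F, mul x (y + z) = mul x y + mul x z) ∧
    (∀ x y : F, mul x y = 0 → x = 0 ∨ y = 0) := by
  obtain rfl : mul = pseudoPlanarMul f := funext₂ hmul
  exact commutative_presemifield_of_quadratic_pseudoPlanar_odd_general hquad
    fun a ha => (hpp a ha).injective
end
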